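/- Criterion for the D_4^+ singularity: let f be a generalized timelike minimal surface with real Weierstrass data (g1, g2, ω1 du, ω2 dv) and let p be a point. Then f is A-equivalent at p to the D_4^+ singularity f_{D4+}(u,v) = (uv, u^2 + 3v^2, u^2v + v^3) at the origin if and only if, at p: ω1 = 0, ω2 = 0, g1 g2 ≠ 1, (g1)_u (g2)_v ≠ 0, and (ω1)_u (ω2)_v ≠ 0. -/

import Mathlib

noncomputable section

open Real Filter

abbrev R2 : Type := ℝ × ℝ
abbrev R3 : Type := ℝ × ℝ × ℝ

/-- The partial derivative in the `u`-direction. -/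
def pu (f : R2 → R3) (p : R2) : R3 := fderiv ℝ f p (1, 0)
/-- The partial derivative in the `v`-direction. -/
def pv (f : R2 → R3) (p : R2) : R3 := fderiv ℝ f p (0, 1)

/-- Determinant of three column vectors in ℝ³. -/
def det3 (a b c : R3) : ℝ :=
  a.1 * (b.2.1 * c.2.2 - b.2.2 * c.2.1)
  - b.1 * (a.2.1 * c.2.2 - a.2.2 * c.2.1)
  + c.1 * (a.2.1 * b.2.2 - a.2.2 * b.2.1)

/-- Determinant of two vectors in ℝ². -/
def det2 (a b : R2) : ℝ := a.1 * b.2 - a.2 * b.1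

/-- Euclidean inner product on ℝ³. -/
def ip3 (a b : R3) : ℝ := a.1 * b.1 + a.2.1 * b.2.1 + a.2.2 * b.2.2

/-- `f : ℝ² → ℝ³ = 𝕃³` is the generalized timelike minimal surface with real Weierstrass
data `(g1, g2, w1 du, w2 dv)`: it is smooth, its partial derivatives are
`f_u = (ω1/2)·(-1-g1², 1-g1², 2g1)` and `f_v = (ω2/2)·(1+g2², 1-g2², -2g2)`
(which encodes the Weierstrass-type integral representation), and it is an immersion
on an open dense set. -/
structure IsGTMS (f : R2 → R3) (g1 g2 w1 w2 : ℝ → ℝ) : Prop where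
  smooth_f : ContDiff ℝ (⊤ : ℕ∞) f
  smooth_g1 : ContDiff ℝ (⊤ : ℕ∞) g1
  smooth_g2 : ContDiff ℝ (⊤ : ℕ∞) g2
  smooth_w1 : ContDiff ℝ (⊤ : ℕ∞) w1
  smooth_w2 : ContDiff ℝ (⊤ : ℕ∞) w2
  deriv_u : ∀ p : R2, pu f p =
    ((-1 - g1 p.1 ^ 2) * w1 p.1 / 2, (1 - g1 p.1 ^ 2) * w1 p.1 / 2, g1 p.1 * w1 p.1)
  deriv_v : ∀ p : R2, pv f p =
    ((1 + g2 p.2 ^ 2) * w2 p.2 / 2, (1 - g2 p.2 ^ 2) * w2 p.2 / 2, -(g2 p.2 * w2 p.2))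
  dense_immersion : Dense {p : R2 | Function.Injective (fderiv ℝ f p)}

/-- `Φ` is a germ of diffeomorphism at `p`. -/
def IsLocalDiffeoAt {E F : Type*} [NormedAddCommGroup E] [NormedSpace ℝ E]
    [NormedAddCommGroup F] [NormedSpace ℝ F] (Φ : E → F) (p : E) : Prop :=
  ∃ (U : Set E) (V : Set F) (Φinv : F → E),
    IsOpen U ∧ p ∈ U ∧ IsOpen V ∧ Φ p ∈ V ∧
    ContDiffOn ℝ (⊤ : ℕ∞) Φ U ∧ ContDiffOn ℝ (⊤ : ℕ∞) Φinv V ∧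
    Set.MapsTo Φ U V ∧ Set.MapsTo Φinv V U ∧
    (∀ x ∈ U, Φinv (Φ x) = x) ∧ (∀ y ∈ V, Φ (Φinv y) = y)

/-- 𝒜-equivalence of the germ of `f1` at `p1` and the germ of `f2` at `p2`. -/
def AEquiv (f1 : R2 → R3) (p1 : R2) (f2 : R2 → R3) (p2 : R2) : Prop :=
  ∃ (Φ : R2 → R2) (Ψ : R3 → R3),
    IsLocalDiffeoAt Φ p1 ∧ Φ p1 = p2 ∧
    IsLocalDiffeoAt Ψ (f1 p1) ∧ Ψ (f1 p1) = f2 p2 ∧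
    ∀ᶠ x in nhds p1, Ψ (f1 x) = f2 (Φ x)

/-- The canonical unit normal of a generalized timelike minimal surface. -/
def gtmsNormal (g1 g2 : ℝ → ℝ) (p : R2) : R3 :=
  (Real.sqrt ((1 - g1 p.1 * g2 p.2) ^ 2 + 2 * (g1 p.1 + g2 p.2) ^ 2))⁻¹ •
    (g1 p.1 + g2 p.2, -g1 p.1 + g2 p.2, 1 + g1 p.1 * g2 p.2)

/-- The signed area density function `λ = det(f_u, f_v, n)`. -/
def areaDensity (f : R2 → R3) (g1 g2 : ℝ → ℝ) (p : R2) : ℝ :=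
  det3 (pu f p) (pv f p) (gtmsNormal g1 g2 p)

/-- `f` is a front at `p`: the Legendrian lift `(f, n)` is an immersion at `p`,
where `n` is the canonical unit normal. -/
def IsFrontAt (f : R2 → R3) (g1 g2 : ℝ → ℝ) (p : R2) : Prop :=
  Function.Injective (fderiv ℝ (fun q => (f q, gtmsNormal g1 g2 q)) p)

/-- The differential of `f` at `p` has rank one. -/
def RankOne (f : R2 → R3) (p : R2) : Prop :=
  LinearMap.rank (fderiv ℝ f p).toLinearMap = 1

/-- Directional derivative of `F` along the vector field `X`. -/
def vD (X : R2 → R2) (F : R2 → R3) : R2 → R3 := fun q => fderiv ℝ F q (X q)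

/-- `φ_i = g_i' / (g_i² ω_i)`. -/
def phiW (g w : ℝ → ℝ) : ℝ → ℝ := fun t => deriv g t / (g t ^ 2 * w t)
/-- `Φ_i = (g_i/g_i') φ_i'`. -/
def PhiW (g w : ℝ → ℝ) : ℝ → ℝ := fun t => g t / deriv g t * deriv (phiW g w) t

/-- standard cuspidal butterfly -/
def fCBF : R2 → R3 := fun q =>
  (q.1, 5 * q.2 ^ 4 + 2 * q.1 * q.2, 4 * q.2 ^ 5 + q.1 * q.2 ^ 2 - q.1 ^ 2)
/-- standard cuspidal S₁⁺ singularity -/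
def fCS1p : R2 → R3 := fun q => (q.1, q.2 ^ 2, q.2 ^ 3 * (q.1 ^ 2 + q.2 ^ 2))
/-- standard cuspidal S₁⁻ singularity -/
def fCS1m : R2 → R3 := fun q => (q.1, q.2 ^ 2, q.2 ^ 3 * (q.1 ^ 2 - q.2 ^ 2))
/-- standard cuspidal edge -/
def fCE : R2 → R3 := fun q => (q.1, q.2 ^ 2, q.2 ^ 3)
/-- standard (2,5)-cuspidal edge -/
def fCE25 : R2 → R3 := fun q => (q.1, q.2 ^ 2, q.2 ^ 5)
/-- standard cuspidal beaks -/
def fCBK : R2 → R3 := fun q =>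
  (q.2, q.1 ^ 3 - q.1 * q.2 ^ 2, 3 * q.1 ^ 4 - 2 * q.1 ^ 2 * q.2 ^ 2)
/-- standard cuspidal lips -/
def fCLP : R2 → R3 := fun q =>
  (q.2, q.1 ^ 3 + q.1 * q.2 ^ 2, 3 * q.1 ^ 4 + 2 * q.1 ^ 2 * q.2 ^ 2)
/-- standard D₄⁺ singularity -/
def fD4p : R2 → R3 := fun q =>
  (q.1 * q.2, q.1 ^ 2 + 3 * q.2 ^ 2, q.1 ^ 2 * q.2 + q.2 ^ 3)
/-- standard D₄⁻ singularity -/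
def fD4m : R2 → R3 := fun q =>
  (q.1 * q.2, q.1 ^ 2 - 3 * q.2 ^ 2, q.1 ^ 2 * q.2 - q.2 ^ 3)

/-!
A generalized timelike minimal surface is a sum `A u + B v` of two curves with velocities
`A' = ω₁ φ₁(g₁)` and `B' = ω₂ φ₂(g₂)`, and the `D₄⁺` singularity becomes, in linear coordinates,
the sum of two cusps `(u², v², u³ + v³)`. For arbitrary smooth curves, `A u + B v` is 𝒜-equivalent
to the sum of two cusps if and only if `A' = B' = 0` and neither `det (A'', B'', A''')` nor
`det (A'', B'', B''')` vanishes; for the curves above and `ω₁ = ω₂ = 0` these determinants are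
`-ω₁'² ω₂' g₁' (1 - g₁ g₂)²` and `ω₁' ω₂'² g₂' (1 - g₁ g₂)²`.

Necessity is a computation with jets. Where the first derivative of a curve vanishes, its second
and third derivatives are transported by the differential of the target diffeomorphism. Since there
is no mixed term in `A u + B v`, the differential of the source diffeomorphism maps the axes to the
axes, and the determinants are then those of the sum of two cusps.

For sufficiency, let `A u = u² a(u)` and `B v = v² b(v)` with `a(0) = e₁` and `b(0) = e₂`. A
function `K` on `ℝ³` vanishing on the cusp `B` pulls back to a square `x²` with `x = u r(u, v)`,
and a function vanishing on `A` to a square `y²` with `y = v s(u, v)`; in these coordinates the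
surface is `(x², y², h(x, y))`. By Whitney's theorem `h = α + x β + y γ + x y δ`, where
`α, β, γ, δ` are smooth functions of `(x², y²)`. The surface is a cuspidal edge along each axis, so
that `β` is divisible by `x²`, `γ` by `y²` and `δ` by `x² y²`, and what remains is normalized by
explicit diffeomorphisms. Whitney's theorem follows from Fourier inversion, because `cos √t` and
`sin √t / √t` extend to smooth functions all of whose derivatives are bounded on `t ≥ 0`.
-/

open MeasureTheory
open scoped ContDiff Topology

/-! ### Parameter integrals -/

section TemperateGrowth

universe u

variable {V : Type*} [NormedAddCommGroup V] [NormedSpace ℝ V]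
  {E F : Type u} [NormedAddCommGroup E] [NormedSpace ℝ E] [NormedAddCommGroup F] [NormedSpace ℝ F]

theorem hasTemperateGrowth_fderiv {f : V → F} (hf : f.HasTemperateGrowth) :
    (fderiv ℝ f).HasTemperateGrowth := by
  refine ⟨hf.1.fderiv_right (by simp), fun n => ?_⟩
  simpa only [norm_iteratedFDeriv_fderiv] using hf.2 (n + 1)

theorem hasTemperateGrowth_fderiv_comp_inr {G : V × E → F} (hG : G.HasTemperateGrowth) :
    (fun q => (fderiv ℝ G q).comp (ContinuousLinearMap.inr ℝ V E)).HasTemperateGrowth :=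
  ((ContinuousLinearMap.compL ℝ E (V × E) F).flip
    (ContinuousLinearMap.inr ℝ V E)).hasTemperateGrowth.comp (hasTemperateGrowth_fderiv hG)

theorem exists_norm_le_mul_pow_mul_pow {G : V × E → F} (hG : G.HasTemperateGrowth) :
    ∃ (k : ℕ) (C : ℝ), 0 ≤ C ∧ ∀ ξ x, ‖G (ξ, x)‖ ≤ C * (1 + ‖x‖) ^ k * (1 + ‖ξ‖) ^ k := by
  obtain ⟨k, C, hC⟩ := hG.2 0
  simp only [norm_iteratedFDeriv_zero] at hC
  have hC₀ : 0 ≤ C := by simpa using (norm_nonneg _).trans (hC 0)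
  refine ⟨k, C, hC₀, fun ξ x => (hC _).trans ?_⟩
  rw [mul_assoc, ← mul_pow]
  have hnorm : ‖(ξ, x)‖ ≤ ‖ξ‖ + ‖x‖ := max_le_add_of_nonneg (norm_nonneg _) (norm_nonneg _)
  gcongr
  nlinarith [mul_nonneg (norm_nonneg x) (norm_nonneg ξ)]

variable [MeasurableSpace V] [OpensMeasurableSpace V] [SecondCountableTopology V]
  {𝕜 : Type*} [NormedField 𝕜] [NormedSpace 𝕜 F] {μ : Measure V} {φ : V → 𝕜}

theorem integrable_smul_of_hasTemperateGrowth (hφ : AEStronglyMeasurable φ μ)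
    (hmom : ∀ k : ℕ, Integrable (fun ξ => (1 + ‖ξ‖) ^ k * ‖φ ξ‖) μ)
    {G : V × E → F} (hG : G.HasTemperateGrowth) (x : E) :
    Integrable (fun ξ => φ ξ • G (ξ, x)) μ := by
  obtain ⟨k, C, -, hC⟩ := exists_norm_le_mul_pow_mul_pow hG
  have hcont := hG.1.continuous
  refine ((hmom k).const_mul (C * (1 + ‖x‖) ^ k)).mono'
    (hφ.smul (by fun_prop : Continuous fun ξ => G (ξ, x)).aestronglyMeasurable)
    (.of_forall fun ξ => ?_)
  calc ‖φ ξ • G (ξ, x)‖ ≤ ‖φ ξ‖ * (C * (1 + ‖x‖) ^ k * (1 + ‖ξ‖) ^ k) := by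
        rw [norm_smul]; gcongr; exact hC ξ x
    _ = C * (1 + ‖x‖) ^ k * ((1 + ‖ξ‖) ^ k * ‖φ ξ‖) := by ring

variable [SMulCommClass ℝ 𝕜 F]

theorem hasFDerivAt_integral_smul_of_hasTemperateGrowth (hφ : AEStronglyMeasurable φ μ)
    (hmom : ∀ k : ℕ, Integrable (fun ξ => (1 + ‖ξ‖) ^ k * ‖φ ξ‖) μ)
    {G : V × E → F} (hG : G.HasTemperateGrowth) (x₀ : E) :
    HasFDerivAt (fun x : E => ∫ ξ, φ ξ • G (ξ, x) ∂μ)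
      (∫ ξ, φ ξ • (fderiv ℝ G (ξ, x₀)).comp (ContinuousLinearMap.inr ℝ V E) ∂μ) x₀ := by
  have hG' := hasTemperateGrowth_fderiv_comp_inr hG
  have hint := integrable_smul_of_hasTemperateGrowth hφ hmom hG
  obtain ⟨k, C, hC₀, hC⟩ := exists_norm_le_mul_pow_mul_pow hG'
  refine hasFDerivAt_integral_of_dominated_of_fderiv_le
    (F' := fun x ξ => φ ξ • (fderiv ℝ G (ξ, x)).comp (ContinuousLinearMap.inr ℝ V E))
    (Metric.ball_mem_nhds x₀ one_pos)
    (.of_forall fun x => (hint x).aestronglyMeasurable) (hint x₀)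
    (integrable_smul_of_hasTemperateGrowth hφ hmom hG' x₀).aestronglyMeasurable
    (.of_forall fun ξ x hx => ?_) ((hmom k).const_mul (C * (1 + (‖x₀‖ + 1)) ^ k))
    (.of_forall fun ξ x _ => ?_)
  · have hx₀ : ‖x‖ ≤ ‖x₀‖ + 1 := by
      linarith [norm_sub_norm_le x x₀, mem_ball_iff_norm.1 hx]
    calc ‖φ ξ • (fderiv ℝ G (ξ, x)).comp (ContinuousLinearMap.inr ℝ V E)‖
        ≤ ‖φ ξ‖ * (C * (1 + ‖x‖) ^ k * (1 + ‖ξ‖) ^ k) := by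
          rw [norm_smul]; gcongr; exact hC ξ x
      _ ≤ ‖φ ξ‖ * (C * (1 + (‖x₀‖ + 1)) ^ k * (1 + ‖ξ‖) ^ k) := by gcongr
      _ = C * (1 + (‖x₀‖ + 1)) ^ k * ((1 + ‖ξ‖) ^ k * ‖φ ξ‖) := by ring
  · exact ((hG.1.differentiable (by simp) (ξ, x)).hasFDerivAt.comp x
      (hasFDerivAt_prodMk_right ξ x)).const_smul (φ ξ)

theorem contDiff_integral_smul_of_hasTemperateGrowth (hφ : AEStronglyMeasurable φ μ)
    (hmom : ∀ k : ℕ, Integrable (fun ξ => (1 + ‖ξ‖) ^ k * ‖φ ξ‖) μ)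
    {G : V × E → F} (hG : G.HasTemperateGrowth) :
    ContDiff ℝ ∞ fun x : E => ∫ ξ, φ ξ • G (ξ, x) ∂μ := by
  refine contDiff_infty.2 fun n => ?_
  induction n generalizing F with
  | zero =>
    exact contDiff_zero.2 <| continuous_iff_continuousAt.2 fun x =>
      (hasFDerivAt_integral_smul_of_hasTemperateGrowth hφ hmom hG x).continuousAt
  | succ n ih =>
    have hderiv := hasFDerivAt_integral_smul_of_hasTemperateGrowth hφ hmom hG
    rw [Nat.cast_add_one, contDiff_succ_iff_fderiv]
    refine ⟨fun x => (hderiv x).differentiableAt, by simp, ?_⟩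
    rw [funext fun x => (hderiv x).fderiv]
    exact ih (hasTemperateGrowth_fderiv_comp_inr hG)

end TemperateGrowth

theorem exists_contDiff_hasCompactSupport_eventuallyEq {E F : Type*} [NormedAddCommGroup E]
    [NormedSpace ℝ E] [FiniteDimensional ℝ E] [NormedAddCommGroup F] [NormedSpace ℝ F]
    {h : E → F} {x₀ : E} (hh : ∀ᶠ x in 𝓝 x₀, ContDiffAt ℝ ∞ h x) :
    ∃ k : E → F, ContDiff ℝ ∞ k ∧ HasCompactSupport k ∧ k =ᶠ[𝓝 x₀] h := by
  obtain ⟨r, hr, hball⟩ := Metric.eventually_nhds_iff_ball.1 hh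
  let χ : ContDiffBump x₀ := ⟨r / 4, r / 2, by positivity, by linarith⟩
  have hsupp : tsupport (fun x => χ x • h x) ⊆ Metric.ball x₀ r :=
    (tsupport_smul_subset_left _ _).trans <| χ.tsupport_eq.subset.trans <|
      Metric.closedBall_subset_ball (half_lt_self hr)
  refine ⟨fun x => χ x • h x, contMDiff_iff_contDiff.1 <| contMDiff_of_tsupport fun x hx =>
    (χ.contDiff.contDiffAt.smul (hball x (hsupp hx))).contMDiffAt,
    χ.hasCompactSupport.smul_right, ?_⟩
  filter_upwards [χ.eventuallyEq_one] with x hx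
  simp [hx]

/-! ### Hadamard's lemma -/

section Hadamard

universe u

variable {E F : Type u} [NormedAddCommGroup E] [NormedSpace ℝ E]
  [NormedAddCommGroup F] [NormedSpace ℝ F]

theorem hasTemperateGrowth_prodMk_mul :
    Function.HasTemperateGrowth fun w : ℝ × (E × ℝ) => (w.2.1, w.1 * w.2.2) := by
  have hfst : Function.HasTemperateGrowth fun w : ℝ × (E × ℝ) => w.1 :=
    (ContinuousLinearMap.fst ℝ ℝ (E × ℝ)).hasTemperateGrowth
  have hsnd : Function.HasTemperateGrowth fun w : ℝ × (E × ℝ) => w.2 :=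
    (ContinuousLinearMap.snd ℝ ℝ (E × ℝ)).hasTemperateGrowth
  have hinl : Function.HasTemperateGrowth fun w : ℝ × (E × ℝ) => (w.2.1, (0 : ℝ)) :=
    ((ContinuousLinearMap.inl ℝ E ℝ).comp (.fst ℝ E ℝ)).hasTemperateGrowth.comp hsnd
  have hinr : Function.HasTemperateGrowth fun w : ℝ × (E × ℝ) => ((0 : E), w.1 * w.2.2) :=
    (ContinuousLinearMap.inr ℝ E ℝ).hasTemperateGrowth.comp
      (hfst.mul ((ContinuousLinearMap.snd ℝ E ℝ).hasTemperateGrowth.comp hsnd))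
  convert hinl.add hinr using 1
  ext w <;> simp

theorem sub_eq_smul_integral_fderiv [CompleteSpace F] {g : E × ℝ → F} (hg : ContDiff ℝ ∞ g)
    (q : E × ℝ) :
    g q - g (q.1, 0) = q.2 • ∫ t in (0 : ℝ)..1, fderiv ℝ g (q.1, t * q.2) (0, 1) := by
  have hderiv (t : ℝ) : HasDerivAt (fun t : ℝ => g (q.1, t * q.2))
      (q.2 • fderiv ℝ g (q.1, t * q.2) (0, 1)) t := by
    have hline : HasDerivAt (fun t : ℝ => (q.1, t * q.2)) (q.2 • ((0 : E), (1 : ℝ))) t := by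
      simpa using (hasDerivAt_const t q.1).prodMk ((hasDerivAt_id t).mul_const q.2)
    rw [← map_smul]
    exact (hg.differentiable (by simp) _).hasFDerivAt.comp_hasDerivAt t hline
  have hcont : Continuous fun t : ℝ => q.2 • fderiv ℝ g (q.1, t * q.2) (0, 1) := by
    have := hg.continuous_fderiv (by simp)
    fun_prop
  rw [← intervalIntegral.integral_smul, intervalIntegral.integral_eq_sub_of_hasDerivAt
    (fun t _ => hderiv t) (hcont.intervalIntegrable _ _)]
  simp

theorem exists_eventually_eq_add_smul [FiniteDimensional ℝ E] [CompleteSpace F] {h : E × ℝ → F}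
    (hh : ContDiff ℝ ∞ h) (x₀ : E) : ∃ k : E × ℝ → F, ContDiff ℝ ∞ k ∧
      ∀ᶠ q in 𝓝 (x₀, (0 : ℝ)), h q = h (q.1, 0) + q.2 • k q := by
  obtain ⟨g, hg, hgc, hgh⟩ := exists_contDiff_hasCompactSupport_eventuallyEq
    (.of_forall fun q => hh.contDiffAt (x := q))
  have hG : Function.HasTemperateGrowth
      fun w : ℝ × (E × ℝ) => fderiv ℝ g (w.2.1, w.1 * w.2.2) (0, 1) :=
    (ContinuousLinearMap.apply ℝ F ((0, 1) : E × ℝ)).hasTemperateGrowth.comp <|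
      (hasTemperateGrowth_fderiv (hgc.hasTemperateGrowth hg)).comp hasTemperateGrowth_prodMk_mul
  have hmom (k : ℕ) : Integrable (fun t : ℝ => (1 + ‖t‖) ^ k * ‖(1 : ℝ)‖)
      (volume.restrict (Set.Ioc 0 1)) :=
    (Continuous.integrableOn_Icc (by fun_prop)).mono_set Set.Ioc_subset_Icc_self
  refine ⟨fun q => ∫ t in (0 : ℝ)..1, fderiv ℝ g (q.1, t * q.2) (0, 1), ?_, ?_⟩
  · simpa only [one_smul, intervalIntegral.integral_of_le zero_le_one] using
      contDiff_integral_smul_of_hasTemperateGrowth aestronglyMeasurable_const hmom hG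
  · have haxis : Tendsto (fun q : E × ℝ => (q.1, (0 : ℝ))) (𝓝 (x₀, 0)) (𝓝 (x₀, 0)) :=
      Continuous.tendsto' (by fun_prop) _ _ rfl
    filter_upwards [hgh, haxis.eventually hgh] with q hq hq₀
    rw [← hq, ← hq₀, ← sub_eq_smul_integral_fderiv hg, add_sub_cancel]

end Hadamard

/-! ### Whitney's theorem -/

section CosSqrt

theorem exists_contDiff_cos_sqrt :
    ∃ e : ℝ → ℝ, ContDiff ℝ ∞ e ∧ ∀ u, e (u ^ 2) = Real.cos u := by
  let c : ℕ → ℝ := fun n => (-1) ^ n / (2 * n).factorial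
  have hratio (n : ℕ) : ‖c n.succ‖ / ‖c n‖ = 1 / ((2 * (n : ℝ) + 2) * (2 * n + 1)) := by
    have hfact : (2 * n.succ).factorial = (2 * n + 2) * ((2 * n + 1) * (2 * n).factorial) := by
      rw [show 2 * n.succ = 2 * n + 1 + 1 by lia, Nat.factorial_succ, Nat.factorial_succ]
    simp only [c, hfact, norm_div, norm_pow, norm_neg, norm_one, one_pow, RCLike.norm_natCast]
    push_cast
    field_simp
  have hrad : (FormalMultilinearSeries.ofScalars ℝ c).radius = ⊤ := by
    refine FormalMultilinearSeries.ofScalars_radius_eq_top_of_tendsto ℝ c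
      (.of_forall fun n => by positivity) ?_
    simp_rw [hratio]
    refine squeeze_zero (fun n => by positivity) (fun n => ?_)
      (tendsto_one_div_add_atTop_nhds_zero_nat (𝕜 := ℝ))
    gcongr
    nlinarith [(n.cast_nonneg : (0 : ℝ) ≤ n)]
  have hseries := (FormalMultilinearSeries.ofScalars ℝ c).hasFPowerSeriesOnBall (by simp [hrad])
  rw [hrad] at hseries
  refine ⟨_, contDiff_iff_contDiffAt.2 fun x =>
    (hseries.analyticAt_of_mem (by simp)).contDiffAt, fun u => ?_⟩
  have hsum := hseries.hasSum (y := u ^ 2) (by simp)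
  rw [zero_add] at hsum
  refine hsum.unique <| (Real.hasSum_cos u).congr_fun fun n => ?_
  rw [FormalMultilinearSeries.ofScalars_apply_eq]
  simp only [c, smul_eq_mul]
  ring

variable {e : ℝ → ℝ}

theorem hasDerivAt_iteratedDeriv (he : ContDiff ℝ ∞ e) (n : ℕ) (t : ℝ) :
    HasDerivAt (iteratedDeriv n e) (iteratedDeriv (n + 1) e t) t := by
  rw [iteratedDeriv_succ]
  exact (he.differentiable_iteratedDeriv n (mod_cast WithTop.coe_lt_top _) t).hasDerivAt

theorem two_mul_mul_deriv_sq_eq_neg_sin (he : ContDiff ℝ ∞ e) (hcos : ∀ u, e (u ^ 2) = cos u)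
    (u : ℝ) : 2 * u * deriv e (u ^ 2) = -sin u := by
  have hcomp : HasDerivAt (fun u => e (u ^ 2)) (deriv e (u ^ 2) * (2 * u)) u :=
    ((he.differentiable (by simp) (u ^ 2)).hasDerivAt.comp u (hasDerivAt_pow 2 u)).congr_deriv
      (by simp)
  rw [funext hcos] at hcomp
  rw [mul_comm, hcomp.unique (hasDerivAt_cos u)]

theorem iteratedDeriv_cos_sqrt_recurrence (he : ContDiff ℝ ∞ e) (hcos : ∀ u, e (u ^ 2) = cos u)
    (n : ℕ) {t : ℝ} (ht : 0 < t) :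
    4 * t * iteratedDeriv (n + 2) e t + (4 * n + 2) * iteratedDeriv (n + 1) e t
      + iteratedDeriv n e t = 0 := by
  induction n generalizing t with
  | zero =>
    set u := √t
    have hu : u ^ 2 = t := sq_sqrt ht.le
    have hcomp : HasDerivAt (fun u => 2 * u * deriv e (u ^ 2))
        (2 * deriv e (u ^ 2) + 2 * u * (iteratedDeriv 2 e (u ^ 2) * (2 * u))) u := by
      have hsecond := (hasDerivAt_iteratedDeriv he 1 (u ^ 2)).comp u (hasDerivAt_pow 2 u)
      rw [iteratedDeriv_one] at hsecond
      exact (((hasDerivAt_id u).const_mul 2).mul hsecond).congr_deriv (by simp)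
    rw [funext (two_mul_mul_deriv_sq_eq_neg_sin he hcos)] at hcomp
    have hval := hcomp.unique (hasDerivAt_sin u).neg
    rw [← hcos u, hu] at hval
    simp only [zero_add, iteratedDeriv_one, iteratedDeriv_zero, Nat.cast_zero, mul_zero]
    linear_combination hval - 4 * iteratedDeriv 2 e t * hu
  | succ n ih =>
    have hderiv := ((((hasDerivAt_id t).const_mul 4).mul
      (hasDerivAt_iteratedDeriv he (n + 2) t)).add
      ((hasDerivAt_iteratedDeriv he (n + 1) t).const_mul (4 * (n : ℝ) + 2))).add
      (hasDerivAt_iteratedDeriv he n t)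
    have hzero : HasDerivAt (fun _ : ℝ => (0 : ℝ)) _ t := hderiv.congr_of_eventuallyEq <| by
      filter_upwards [lt_mem_nhds ht] with s hs using (ih hs).symm
    have hval := hzero.unique (hasDerivAt_const t 0)
    simp only [id] at hval
    push_cast
    linear_combination hval

theorem abs_iteratedDeriv_cos_sqrt_le (he : ContDiff ℝ ∞ e) (hcos : ∀ u, e (u ^ 2) = cos u)
    (n : ℕ) : ∃ C, ∀ t ≥ 1, |iteratedDeriv n e t| ≤ C := by
  suffices (∃ C, ∀ t ≥ 1, |iteratedDeriv n e t| ≤ C) ∧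
      ∃ C, ∀ t ≥ 1, |iteratedDeriv (n + 1) e t| ≤ C from this.1
  induction n with
  | zero =>
    refine ⟨⟨1, fun t ht => ?_⟩, 1, fun t ht => ?_⟩
    · simpa [sq_sqrt (zero_le_one.trans ht), ← hcos] using abs_cos_le_one √t
    · have hu : 1 ≤ √t := one_le_sqrt.2 ht
      have hsin := abs_sin_le_one √t
      rw [← abs_neg, ← two_mul_mul_deriv_sq_eq_neg_sin he hcos, sq_sqrt (zero_le_one.trans ht),
        abs_mul, abs_of_pos (by positivity)] at hsin
      rw [zero_add, iteratedDeriv_one]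
      nlinarith [abs_nonneg (deriv e t)]
  | succ n ih =>
    obtain ⟨⟨C, hC⟩, D, hD⟩ := ih
    refine ⟨⟨D, hD⟩, (4 * n + 2) * D + C, fun t ht => ?_⟩
    calc |iteratedDeriv (n + 2) e t| ≤ 4 * t * |iteratedDeriv (n + 2) e t| :=
          le_mul_of_one_le_left (abs_nonneg _) (by linarith)
      _ = |(4 * n + 2) * iteratedDeriv (n + 1) e t + iteratedDeriv n e t| := by
          rw [← abs_of_pos (by linarith : 0 < 4 * t), ← abs_mul, ← abs_neg]
          congr 1
          linear_combination -iteratedDeriv_cos_sqrt_recurrence he hcos n (zero_lt_one.trans_le ht)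
      _ ≤ (4 * n + 2) * |iteratedDeriv (n + 1) e t| + |iteratedDeriv n e t| := by
          refine (abs_add_le _ _).trans_eq ?_
          rw [abs_mul, abs_of_nonneg (by positivity : (0 : ℝ) ≤ 4 * n + 2)]
      _ ≤ (4 * n + 2) * D + C := by gcongr; exacts [hD t ht, hC t ht]

theorem hasTemperateGrowth_of_eqOn_zero_of_bounded {f : ℝ → ℝ} (hf : ContDiff ℝ ∞ f) {a b : ℝ}
    (hzero : Set.EqOn f 0 (Set.Iio a)) (hbdd : ∀ n, ∃ C, ∀ t ≥ b, |iteratedDeriv n f t| ≤ C) :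
    f.HasTemperateGrowth := by
  refine ⟨hf, fun n => ?_⟩
  obtain ⟨C, hC⟩ := hbdd n
  obtain ⟨D, hD⟩ := isCompact_Icc.exists_bound_of_continuousOn (s := Set.Icc (a - 1) b)
    (hf.continuous_iteratedDeriv n (mod_cast le_top)).continuousOn
  refine ⟨0, max C (max D 0), fun t => ?_⟩
  rw [pow_zero, mul_one, norm_iteratedFDeriv_eq_norm_iteratedDeriv]
  rcases le_total b t with hbt | htb
  · exact (hC t hbt).trans (le_max_left _ _)
  rcases lt_or_ge t a with hta | hat
  · have hloc : f =ᶠ[𝓝 t] fun _ => 0 := by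
      filter_upwards [Iio_mem_nhds hta] with s hs using hzero hs
    simp [hloc.iteratedDeriv_eq n]
  · exact (hD t ⟨by linarith, htb⟩).trans ((le_max_left _ _).trans (le_max_right _ _))

theorem exists_hasTemperateGrowth_cos_sqrt :
    ∃ e : ℝ → ℝ, e.HasTemperateGrowth ∧ ∀ u, e (u ^ 2) = cos u := by
  obtain ⟨e, he, hcos⟩ := exists_contDiff_cos_sqrt
  have hcutoff : ContDiff ℝ ∞ fun t => Real.smoothTransition (t + 1) * e t :=
    (Real.smoothTransition.contDiff.comp (contDiff_id.add contDiff_const)).mul he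
  have hcos' (u : ℝ) : Real.smoothTransition (u ^ 2 + 1) * e (u ^ 2) = cos u := by
    rw [Real.smoothTransition.one_of_one_le (by nlinarith), one_mul, hcos]
  refine ⟨_, hasTemperateGrowth_of_eqOn_zero_of_bounded hcutoff (a := -1) (fun t ht => ?_)
    (abs_iteratedDeriv_cos_sqrt_le hcutoff hcos'), hcos'⟩
  simp [Real.smoothTransition.zero_of_nonpos (by linarith [Set.mem_Iio.1 ht] : t + 1 ≤ 0)]

theorem exists_hasTemperateGrowth_exp_I : ∃ C S : ℝ → ℝ, C.HasTemperateGrowth ∧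
    S.HasTemperateGrowth ∧
    ∀ u : ℝ, Complex.exp (u * Complex.I) = C (u ^ 2) + u * (S (u ^ 2) * Complex.I) := by
  obtain ⟨C, hC, hcos⟩ := exists_hasTemperateGrowth_cos_sqrt
  refine ⟨C, fun t => -2 * fderiv ℝ C t 1, hC, (Function.HasTemperateGrowth.const (-2 : ℝ)).mul
    ((ContinuousLinearMap.apply ℝ ℝ (1 : ℝ)).hasTemperateGrowth.comp
      (hasTemperateGrowth_fderiv hC)), fun u => ?_⟩
  have hsin : (sin u : ℂ) = ((u * (-2 * deriv C (u ^ 2)) : ℝ) : ℂ) :=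
    congrArg _ (by linear_combination two_mul_mul_deriv_sq_eq_neg_sin hC.1 hcos u)
  rw [Complex.exp_mul_I, ← Complex.ofReal_cos, ← Complex.ofReal_sin, hsin, hcos u]
  simp only [fderiv_apply_one_eq_deriv]
  push_cast
  ring

end CosSqrt

section Whitney

open FourierTransform SchwartzMap

theorem integrable_one_add_norm_pow_mul {V F : Type*} [NormedAddCommGroup V] [NormedSpace ℝ V]
    [NormedAddCommGroup F] [NormedSpace ℝ F] [MeasurableSpace V] [BorelSpace V]
    [SecondCountableTopology V] {μ : Measure V} [μ.HasTemperateGrowth] (f : 𝓢(V, F)) (n : ℕ) :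
    Integrable (fun ξ => (1 + ‖ξ‖) ^ n * ‖f ξ‖) μ := by
  have hcont := f.continuous
  refine (((integrable_pow_mul μ f 0).add (integrable_pow_mul μ f n)).const_mul
    (2 ^ (n - 1))).mono' (by fun_prop) (.of_forall fun ξ => ?_)
  rw [Real.norm_of_nonneg (by positivity), Pi.add_apply, ← add_mul, ← mul_assoc, pow_zero]
  gcongr
  simpa using add_pow_le zero_le_one (norm_nonneg ξ) n

theorem exists_eq_integral_smul_exp {k : ℝ × ℝ → ℝ} (hk : ContDiff ℝ ∞ k)
    (hc : HasCompactSupport k) : ∃ t : 𝓢(ℂ, ℂ), ∀ q, (k q : ℂ) = ∫ ξ, t ξ •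
      (Complex.exp ((2 * π * ξ.re * q.1 : ℝ) * Complex.I) *
        Complex.exp ((2 * π * ξ.im * q.2 : ℝ) * Complex.I)) := by
  have hcℂ : HasCompactSupport fun z => (k (Complex.equivRealProdCLM z) : ℂ) :=
    (hc.comp_homeomorph Complex.equivRealProdCLM.toHomeomorph).comp_left (g := Complex.ofReal) rfl
  -- The sup norm makes `ℝ × ℝ` unsuitable for Fourier analysis, so the frequencies live in `ℂ`.
  let s : 𝓢(ℂ, ℂ) := hcℂ.toSchwartzMap
    (Complex.ofRealCLM.contDiff.comp (hk.comp Complex.equivRealProdCLM.contDiff))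
  refine ⟨𝓕 s, fun q => ?_⟩
  have hinv : (𝓕⁻ (𝓕 s)) (Complex.equivRealProdCLM.symm q) = (k q : ℂ) := by
    rw [FourierTransform.fourierInv_fourier_eq]
    exact congrArg (fun x => (k x : ℂ)) (Complex.equivRealProdCLM.apply_symm_apply q)
  rw [← hinv, SchwartzMap.fourierInv_coe, Real.fourierInv_eq']
  refine integral_congr_ae (.of_forall fun ξ => ?_)
  have hinner : 2 * π * inner ℝ ξ (Complex.equivRealProdCLM.symm q)
      = 2 * π * ξ.re * q.1 + 2 * π * ξ.im * q.2 := by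
    simp only [Complex.inner, Complex.equivRealProdCLM_symm_apply, Complex.mul_re, Complex.conj_re,
      Complex.conj_im, Complex.add_re, Complex.add_im, Complex.mul_im, Complex.ofReal_re,
      Complex.ofReal_im, Complex.I_re, Complex.I_im]
    ring
  simp only [hinner, smul_eq_mul, ← Complex.exp_add, ← add_mul, ← Complex.ofReal_add]
  ring

section Kernels

variable {V E : Type*} [NormedAddCommGroup V] [NormedSpace ℝ V] [NormedAddCommGroup E]
  [NormedSpace ℝ E] {e : ℝ → ℝ}

theorem hasTemperateGrowth_ofReal_comp_sq_mul (he : e.HasTemperateGrowth) (ℓ : V →L[ℝ] ℝ)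
    (m : E →L[ℝ] ℝ) :
    Function.HasTemperateGrowth fun w : V × E => (e (ℓ w.1 ^ 2 * m w.2) : ℂ) :=
  Function.Complex.hasTemperateGrowth_ofReal.comp <| he.comp <|
    ((ℓ.comp (.fst ℝ V E)).hasTemperateGrowth.pow 2).mul (m.comp (.snd ℝ V E)).hasTemperateGrowth

theorem hasTemperateGrowth_mul_ofReal_comp_sq_mul_I (he : e.HasTemperateGrowth) (ℓ : V →L[ℝ] ℝ)
    (m : E →L[ℝ] ℝ) : Function.HasTemperateGrowth
      fun w : V × E => (ℓ w.1 : ℂ) * (e (ℓ w.1 ^ 2 * m w.2) * Complex.I) :=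
  (Function.Complex.hasTemperateGrowth_ofReal.comp (ℓ.comp (.fst ℝ V E)).hasTemperateGrowth).mul
    ((hasTemperateGrowth_ofReal_comp_sq_mul he ℓ m).mul (.const Complex.I))

end Kernels

theorem exists_eq_even_odd_of_hasCompactSupport {k : ℝ × ℝ → ℝ} (hk : ContDiff ℝ ∞ k)
    (hc : HasCompactSupport k) : ∃ a b c d : ℝ × ℝ → ℂ,
      ContDiff ℝ ∞ a ∧ ContDiff ℝ ∞ b ∧ ContDiff ℝ ∞ c ∧ ContDiff ℝ ∞ d ∧
      ∀ q, (k q : ℂ) = a (q.1 ^ 2, q.2 ^ 2) + q.1 * b (q.1 ^ 2, q.2 ^ 2)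
        + q.2 * c (q.1 ^ 2, q.2 ^ 2) + (q.1 * q.2 : ℝ) * d (q.1 ^ 2, q.2 ^ 2) := by
  obtain ⟨t, ht⟩ := exists_eq_integral_smul_exp hk hc
  obtain ⟨C, S, hC, hS, hexp⟩ := exists_hasTemperateGrowth_exp_I
  have hsmooth {G : ℂ × (ℝ × ℝ) → ℂ} (hG : G.HasTemperateGrowth) :=
    contDiff_integral_smul_of_hasTemperateGrowth (μ := volume) t.continuous.aestronglyMeasurable
      (integrable_one_add_norm_pow_mul t) hG
  have hint {G : ℂ × (ℝ × ℝ) → ℂ} (hG : G.HasTemperateGrowth) (x : ℝ × ℝ) (r : ℝ) :=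
    (integrable_smul_of_hasTemperateGrowth (μ := volume) t.continuous.aestronglyMeasurable
      (integrable_one_add_norm_pow_mul t) hG x).const_mul (r : ℂ)
  let ℓ₁ : ℂ →L[ℝ] ℝ := (2 * π) • Complex.reCLM
  let ℓ₂ : ℂ →L[ℝ] ℝ := (2 * π) • Complex.imCLM
  have even₁ := hasTemperateGrowth_ofReal_comp_sq_mul hC ℓ₁ (.fst ℝ ℝ ℝ)
  have even₂ := hasTemperateGrowth_ofReal_comp_sq_mul hC ℓ₂ (.snd ℝ ℝ ℝ)
  have odd₁ := hasTemperateGrowth_mul_ofReal_comp_sq_mul_I hS ℓ₁ (.fst ℝ ℝ ℝ)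
  have odd₂ := hasTemperateGrowth_mul_ofReal_comp_sq_mul_I hS ℓ₂ (.snd ℝ ℝ ℝ)
  refine ⟨_, _, _, _, hsmooth (even₁.mul even₂), hsmooth (odd₁.mul even₂),
    hsmooth (even₁.mul odd₂), hsmooth (odd₁.mul odd₂), fun q => ?_⟩
  set x := (q.1 ^ 2, q.2 ^ 2)
  have i₁ := hint (even₁.mul even₂) x 1
  have i₂ := hint (odd₁.mul even₂) x q.1
  have i₃ := hint (even₁.mul odd₂) x q.2
  have i₄ := hint (odd₁.mul odd₂) x (q.1 * q.2)
  simp only [Complex.ofReal_one, one_mul] at i₁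
  rw [ht, ← integral_const_mul, ← integral_const_mul, ← integral_const_mul, ← integral_add i₁ i₂,
    ← integral_add (i₁.fun_add i₂) i₃, ← integral_add ((i₁.fun_add i₂).fun_add i₃) i₄]
  refine integral_congr_ae (.of_forall fun ξ => ?_)
  simp only [hexp, Pi.mul_apply, x, ℓ₁, ℓ₂, smul_apply,
    Complex.reCLM_apply, Complex.imCLM_apply, ContinuousLinearMap.coe_fst',
    ContinuousLinearMap.coe_snd', smul_eq_mul, mul_pow]
  push_cast
  ring

theorem exists_eventually_eq_even_odd {h : ℝ × ℝ → ℝ} (hh : ContDiff ℝ ∞ h) :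
    ∃ a b c d : ℝ × ℝ → ℝ, ContDiff ℝ ∞ a ∧ ContDiff ℝ ∞ b ∧ ContDiff ℝ ∞ c ∧ ContDiff ℝ ∞ d ∧
      ∀ᶠ q in 𝓝 (0 : ℝ × ℝ), h q = a (q.1 ^ 2, q.2 ^ 2) + q.1 * b (q.1 ^ 2, q.2 ^ 2)
        + q.2 * c (q.1 ^ 2, q.2 ^ 2) + q.1 * q.2 * d (q.1 ^ 2, q.2 ^ 2) := by
  obtain ⟨k, hk, hkc, hkh⟩ := exists_contDiff_hasCompactSupport_eventuallyEq
    (.of_forall fun q => hh.contDiffAt (x := q))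
  obtain ⟨a, b, c, d, ha, hb, hc, hd, hkeq⟩ := exists_eq_even_odd_of_hasCompactSupport hk hkc
  refine ⟨_, _, _, _, Complex.reCLM.contDiff.comp ha, Complex.reCLM.contDiff.comp hb,
    Complex.reCLM.contDiff.comp hc, Complex.reCLM.contDiff.comp hd, ?_⟩
  filter_upwards [hkh] with q hq
  simpa only [Function.comp_apply, Complex.reCLM_apply, Complex.ofReal_re, Complex.add_re,
    Complex.re_ofReal_mul, hq] using congrArg Complex.re (hkeq q)

end Whitney

/-! ### 𝒜-equivalence -/

section LocalDiffeo

variable {E F G : Type*} [NormedAddCommGroup E] [NormedSpace ℝ E] [NormedAddCommGroup F]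
  [NormedSpace ℝ F] [NormedAddCommGroup G] [NormedSpace ℝ G] {Φ : E → F} {Θ : F → G} {p : E}

theorem isLocalDiffeoAt_of_injective [FiniteDimensional ℝ E] {Φ : E → E}
    (hΦ : ∀ᶠ x in 𝓝 p, ContDiffAt ℝ ∞ Φ x) (hinj : Function.Injective (fderiv ℝ Φ p)) :
    IsLocalDiffeoAt Φ p := by
  have : CompleteSpace E := FiniteDimensional.complete ℝ E
  let e₀ : E ≃L[ℝ] E :=
    (LinearEquiv.ofInjectiveEndo (fderiv ℝ Φ p).toLinearMap hinj).toContinuousLinearEquiv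
  have he₀ : (e₀ : E →L[ℝ] E) = fderiv ℝ Φ p := by ext x; rfl
  have hp := hΦ.self_of_nhds
  have hfd : ContinuousAt (fderiv ℝ Φ) p := hp.continuousAt_fderiv (by simp)
  have hinv : ∀ᶠ x in 𝓝 p, ∃ e : E ≃L[ℝ] E, (e : E →L[ℝ] E) = fderiv ℝ Φ x :=
    hfd.eventually (he₀ ▸ e₀.nhds)
  obtain ⟨s, hs, hso, hps⟩ := eventually_nhds_iff.1 (hΦ.and hinv)
  have hd : HasFDerivAt Φ (e₀ : E →L[ℝ] E) p := he₀ ▸ (hp.differentiableAt (by simp)).hasFDerivAt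
  let e := (hp.toOpenPartialHomeomorph Φ hd (by simp)).restrOpen s hso
  have hpe : p ∈ e.source := ⟨hp.mem_toOpenPartialHomeomorph_source hd (by simp), hps⟩
  refine ⟨e.source, e.target, e.symm, e.open_source, hpe, e.open_target, e.map_source hpe,
    fun x hx => (hs x hx.2).1.contDiffWithinAt, fun y hy => ?_, fun x hx => e.map_source hx,
    fun y hy => e.map_target hy, fun x hx => e.left_inv hx, fun y hy => e.right_inv hy⟩
  obtain ⟨hsmooth, e', he'⟩ := hs _ (e.map_target hy).2
  refine (e.contDiffAt_symm hy (f₀' := e') ?_ hsmooth).contDiffWithinAt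
  exact he' ▸ (hsmooth.differentiableAt (by simp)).hasFDerivAt

theorem isLocalDiffeoAt_of_inverse {Φ' : F → E} (hΦ : ContDiff ℝ ∞ Φ) (hΦ' : ContDiff ℝ ∞ Φ')
    (hl : Function.LeftInverse Φ' Φ) (hr : Function.RightInverse Φ' Φ) (p : E) :
    IsLocalDiffeoAt Φ p :=
  ⟨.univ, .univ, Φ', isOpen_univ, trivial, isOpen_univ, trivial, hΦ.contDiffOn, hΦ'.contDiffOn,
    Set.mapsTo_univ _ _, Set.mapsTo_univ _ _, fun x _ => hl x, fun y _ => hr y⟩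

namespace IsLocalDiffeoAt

theorem contDiffAt (h : IsLocalDiffeoAt Φ p) : ∀ᶠ x in 𝓝 p, ContDiffAt ℝ ∞ Φ x := by
  obtain ⟨U, V, Φ', hU, hpU, -, -, hΦ, -⟩ := h
  filter_upwards [hU.mem_nhds hpU] with y hy using hΦ.contDiffAt (hU.mem_nhds hy)

theorem continuousAt (h : IsLocalDiffeoAt Φ p) : ContinuousAt Φ p :=
  h.contDiffAt.self_of_nhds.continuousAt

theorem differentiableAt (h : IsLocalDiffeoAt Φ p) : DifferentiableAt ℝ Φ p :=
  h.contDiffAt.self_of_nhds.differentiableAt (by simp)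

theorem comp (hΘ : IsLocalDiffeoAt Θ (Φ p)) (hΦ : IsLocalDiffeoAt Φ p) :
    IsLocalDiffeoAt (Θ ∘ Φ) p := by
  obtain ⟨U, V, Φ', hU, hpU, hV, hpV, hΦ, hΦ', hUV, hVU, hl, hr⟩ := hΦ
  obtain ⟨U', V', Θ', hU', hpU', hV', hpV', hΘ, hΘ', hUV', hVU', hl', hr'⟩ := hΘ
  refine ⟨U ∩ Φ ⁻¹' U', V' ∩ Θ' ⁻¹' V, Φ' ∘ Θ', hΦ.continuousOn.isOpen_inter_preimage hU hU',
    ⟨hpU, hpU'⟩, hΘ'.continuousOn.isOpen_inter_preimage hV' hV, ⟨hpV', ?_⟩,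
    hΘ.comp (hΦ.mono Set.inter_subset_left) fun x hx => hx.2,
    hΦ'.comp (hΘ'.mono Set.inter_subset_left) fun x hx => hx.2, ?_, ?_, ?_, ?_⟩
  · simpa [hl' _ hpU'] using hpV
  · exact fun x hx => ⟨hUV' hx.2, by simpa [hl' _ hx.2] using hUV hx.1⟩
  · exact fun x hx => ⟨hVU hx.2, by simpa [hr _ hx.2] using hVU' hx.1⟩
  · intro x hx
    simp [hl' _ hx.2, hl _ hx.1]
  · intro x hx
    simp [hr _ hx.2, hr' _ hx.1]

theorem exists_isLocalDiffeoAt_inverse (h : IsLocalDiffeoAt Φ p) : ∃ Φ' : F → E,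
    IsLocalDiffeoAt Φ' (Φ p) ∧ Φ' (Φ p) = p ∧
      (∀ᶠ x in 𝓝 p, Φ' (Φ x) = x) ∧ ∀ᶠ y in 𝓝 (Φ p), Φ (Φ' y) = y := by
  obtain ⟨U, V, Φ', hU, hp, hV, hq, hΦ, hΦ', hUV, hVU, hl, hr⟩ := h
  refine ⟨Φ', ⟨V, U, Φ, hV, hq, hU, hVU hq, hΦ', hΦ, hVU, hUV, hr, hl⟩, hl p hp, ?_, ?_⟩
  · filter_upwards [hU.mem_nhds hp] using hl
  · filter_upwards [hV.mem_nhds hq] using hr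

theorem injective_fderiv (h : IsLocalDiffeoAt Φ p) : Function.Injective (fderiv ℝ Φ p) := by
  obtain ⟨Φ', hΦ', -, hl, -⟩ := h.exists_isLocalDiffeoAt_inverse
  have hcomp : fderiv ℝ Φ' (Φ p) ∘L fderiv ℝ Φ p = .id ℝ E :=
    ((hΦ'.differentiableAt.hasFDerivAt.comp p h.differentiableAt.hasFDerivAt).congr_of_eventuallyEq
      (f₁ := id) (hl.mono fun x hx => hx.symm)).unique (hasFDerivAt_id p)
  exact Function.LeftInverse.injective (g := fderiv ℝ Φ' (Φ p)) (DFunLike.congr_fun hcomp)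

theorem exists_contDiff_leftInverse [FiniteDimensional ℝ F] (h : IsLocalDiffeoAt Φ p) :
    ∃ η : F → E, ContDiff ℝ ∞ η ∧ ∀ᶠ x in 𝓝 p, η (Φ x) = x := by
  obtain ⟨Φ', hΦ', -, hl, -⟩ := h.exists_isLocalDiffeoAt_inverse
  obtain ⟨η, hη, -, hηΦ'⟩ := exists_contDiff_hasCompactSupport_eventuallyEq hΦ'.contDiffAt
  refine ⟨η, hη, ?_⟩
  filter_upwards [h.continuousAt.eventually hηΦ', hl] with x hx hlx
  rw [hx, hlx]

end IsLocalDiffeoAt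

end LocalDiffeo

namespace AEquiv

variable {f g h : R2 → R3} {p q r : R2}

theorem trans (hfg : AEquiv f p g q) (hgh : AEquiv g q h r) : AEquiv f p h r := by
  obtain ⟨Φ, Ψ, hΦ, rfl, hΨ, hΨf, hfg⟩ := hfg
  obtain ⟨Φ', Ψ', hΦ', rfl, hΨ', hΨg, hgh⟩ := hgh
  refine ⟨Φ' ∘ Φ, Ψ' ∘ Ψ, hΦ'.comp hΦ, rfl, .comp (hΨf ▸ hΨ') hΨ, ?_, ?_⟩
  · simp [hΨf, hΨg]
  · filter_upwards [hfg, hΦ.continuousAt.eventually hgh] with x hx hx'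
    simp [hx, hx']

theorem symm (hf : ContinuousAt f p) (hfg : AEquiv f p g q) : AEquiv g q f p := by
  obtain ⟨Φ, Ψ, hΦ, rfl, hΨ, hΨf, hfg⟩ := hfg
  obtain ⟨Φ', hΦ', hΦp, -, hΦr⟩ := hΦ.exists_isLocalDiffeoAt_inverse
  obtain ⟨Ψ', hΨ', hΨp, hΨl, -⟩ := hΨ.exists_isLocalDiffeoAt_inverse
  refine ⟨Φ', Ψ', hΦ', hΦp, hΨf ▸ hΨ', hΨf ▸ hΨp, ?_⟩
  have hc : Tendsto Φ' (𝓝 (Φ p)) (𝓝 p) := by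
    simpa only [hΦp] using hΦ'.continuousAt.tendsto
  filter_upwards [hΦr, hc.eventually hfg, hc.eventually (hf.eventually hΨl)] with y hr hy hl
  rw [← hl, hy, hr]

theorem of_target {Ψ : R3 → R3} (hΨ : IsLocalDiffeoAt Ψ (f p))
    (hfg : ∀ᶠ x in 𝓝 p, Ψ (f x) = g x) : AEquiv f p g p :=
  ⟨id, Ψ, isLocalDiffeoAt_of_inverse contDiff_id contDiff_id (fun _ => rfl) (fun _ => rfl) p, rfl,
    hΨ, hfg.self_of_nhds, hfg⟩

theorem of_translate (h : ∀ᶠ q in 𝓝 0, f (p + q) = f p + g q) : AEquiv f p g 0 := by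
  have hg : g 0 = 0 := by simpa using h.self_of_nhds
  refine ⟨fun q => q - p, fun x => x - f p,
    isLocalDiffeoAt_of_inverse (by fun_prop) (contDiff_id.add contDiff_const)
      (sub_add_cancel · p) (add_sub_cancel_right · p) p, sub_self p,
    isLocalDiffeoAt_of_inverse (by fun_prop) (contDiff_id.add contDiff_const)
      (sub_add_cancel · (f p)) (add_sub_cancel_right · (f p)) (f p), by simp [hg], ?_⟩
  have hsub : Tendsto (fun q => q - p) (𝓝 p) (𝓝 0) :=
    Continuous.tendsto' (by fun_prop) _ _ (sub_self p)
  filter_upwards [hsub.eventually h] with q hq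
  simpa [sub_eq_iff_eq_add'] using hq

end AEquiv

theorem hasDerivAt_smul_of_continuousAt {F : Type*} [NormedAddCommGroup F] [NormedSpace ℝ F]
    {m : ℝ → F} (hm : ContinuousAt m 0) : HasDerivAt (fun t => t • m t) (m 0) 0 := by
  rw [hasDerivAt_iff_tendsto_slope_zero]
  refine (hm.tendsto.mono_left nhdsWithin_le_nhds).congr' ?_
  filter_upwards [self_mem_nhdsWithin] with t ht
  simp [smul_smul, inv_mul_cancel₀ (show t ≠ 0 from ht)]

theorem isLocalDiffeoAt_zero_of_map_smul {E : Type*} [NormedAddCommGroup E] [NormedSpace ℝ E]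
    [FiniteDimensional ℝ E] {Φ : E → E} (hΦ : ContDiff ℝ ∞ Φ) (m : E → ℝ → E)
    (hm : ∀ v, ContinuousAt (m v) 0) (hΦm : ∀ v t, Φ (t • v) = t • m v t)
    (hinj : ∀ v, m v 0 = 0 → v = 0) : IsLocalDiffeoAt Φ 0 := by
  refine isLocalDiffeoAt_of_injective (.of_forall fun _ => hΦ.contDiffAt)
    ((injective_iff_map_eq_zero _).2 fun v hv => hinj v ?_)
  have hline : HasDerivAt (fun t : ℝ => t • v) v 0 :=
    hasDerivAt_smul_of_continuousAt continuousAt_const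
  have hfd : HasFDerivAt Φ (fderiv ℝ Φ 0) ((0 : ℝ) • v) := by
    rw [zero_smul]
    exact (hΦ.differentiable (by simp) 0).hasFDerivAt
  have hcomp := hfd.comp_hasDerivAt 0 hline
  rw [hv, show Φ ∘ (fun t : ℝ => t • v) = fun t => t • m v t from funext (hΦm v)] at hcomp
  exact (hasDerivAt_smul_of_continuousAt (hm v)).unique hcomp

section Germs

variable {E : Type*} [NormedAddCommGroup E] [NormedSpace ℝ E] [FiniteDimensional ℝ E]
  {b c : E → ℝ} {x₀ : E}

theorem exists_contDiff_pow_eq_of_pos (hc : ContDiff ℝ ∞ c) (h₀ : 0 < c x₀) {n : ℕ} (hn : n ≠ 0) :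
    ∃ r : E → ℝ, ContDiff ℝ ∞ r ∧ r x₀ ≠ 0 ∧ ∀ᶠ x in 𝓝 x₀, r x ^ n = c x := by
  have hpos : ∀ᶠ x in 𝓝 x₀, 0 < c x := hc.continuous.continuousAt.eventually (lt_mem_nhds h₀)
  obtain ⟨r, hr, -, hrc⟩ := exists_contDiff_hasCompactSupport_eventuallyEq
    (hpos.mono fun x hx => hc.contDiffAt.rpow_const_of_ne (p := (n : ℝ)⁻¹) hx.ne')
  refine ⟨r, hr, hrc.eq_of_nhds.trans_ne (by positivity), ?_⟩
  filter_upwards [hrc, hpos] with x hx hpos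
  rw [hx, Real.rpow_inv_natCast_pow hpos.le hn]

theorem exists_contDiff_pow_three_eq (hc : ContDiff ℝ ∞ c) (h₀ : c x₀ ≠ 0) :
    ∃ r : E → ℝ, ContDiff ℝ ∞ r ∧ r x₀ ≠ 0 ∧ ∀ᶠ x in 𝓝 x₀, r x ^ 3 = c x := by
  rcases h₀.lt_or_gt with hneg | hpos
  · obtain ⟨r, hr, hr₀, hrc⟩ := exists_contDiff_pow_eq_of_pos hc.neg (neg_pos.2 hneg) three_ne_zero
    exact ⟨fun x => -r x, hr.neg, neg_ne_zero.2 hr₀, hrc.mono fun x hx => by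
      rw [Odd.neg_pow (by decide), hx, neg_neg]⟩
  · exact exists_contDiff_pow_eq_of_pos hc hpos three_ne_zero

theorem exists_contDiff_mul_eq (hb : ContDiff ℝ ∞ b) (hc : ContDiff ℝ ∞ c) (h₀ : c x₀ ≠ 0) :
    ∃ r : E → ℝ, ContDiff ℝ ∞ r ∧ ∀ᶠ x in 𝓝 x₀, r x * c x = b x := by
  have hne : ∀ᶠ x in 𝓝 x₀, c x ≠ 0 := hc.continuous.continuousAt.eventually_ne h₀
  obtain ⟨r, hr, -, hrc⟩ := exists_contDiff_hasCompactSupport_eventuallyEq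
    (hne.mono fun x hx => hb.contDiffAt.div hc.contDiffAt hx)
  refine ⟨r, hr, ?_⟩
  filter_upwards [hrc, hne] with x hx hne
  rw [hx, Pi.div_apply, div_mul_cancel₀ _ hne]

end Germs

theorem isLocalDiffeoAt_mul_mul {r s : R2 → ℝ} (hr : ContDiff ℝ ∞ r) (hs : ContDiff ℝ ∞ s)
    (hr₀ : r 0 ≠ 0) (hs₀ : s 0 ≠ 0) :
    IsLocalDiffeoAt (fun q : R2 => (q.1 * r q, q.2 * s q)) 0 := by
  have := hr.continuous
  have := hs.continuous
  refine isLocalDiffeoAt_zero_of_map_smul (by fun_prop)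
    (fun v t => (v.1 * r (t • v), v.2 * s (t • v))) (by fun_prop) (fun v t => ?_) fun v hv => ?_
  · simp [mul_assoc]
  · simpa [hr₀, hs₀, Prod.ext_iff] using hv

theorem tendsto_sq_sq : Tendsto (fun q : R2 => (q.1 ^ 2, q.2 ^ 2)) (𝓝 0) (𝓝 (0 : R2)) :=
  Continuous.tendsto' (by fun_prop) _ _ (by simp)

theorem tendsto_mk_zero : Tendsto (fun s : ℝ => ((s, 0) : R2)) (𝓝 0) (𝓝 0) :=
  Continuous.tendsto' (by fun_prop) _ _ rfl

theorem tendsto_swap_zero : Tendsto (Prod.swap : R2 → R2) (𝓝 0) (𝓝 0) :=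
  continuous_swap.tendsto' _ _ rfl

theorem contDiff_swap : ContDiff ℝ ∞ (Prod.swap : R2 → R2) :=
  contDiff_snd.prodMk contDiff_fst

/-! ### Sums of two cusps -/

/-- The superposition of two cuspidal curves: the model of the `D₄⁺` singularity which is a
translation surface. -/
def sumOfCusps (q : R2) : R3 := (q.1 ^ 2, q.2 ^ 2, q.1 ^ 3 + q.2 ^ 3)

theorem aEquiv_sumOfCusps_fD4p : AEquiv sumOfCusps 0 fD4p (0, 0) := by
  have h3 : √3 ≠ 0 := by positivity
  have hsq : √3 ^ 2 = 3 := Real.sq_sqrt (by norm_num)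
  refine ⟨fun q => ((q.1 - q.2) / 2, (q.1 + q.2) / (2 * √3)),
    fun w => ((w.1 - w.2.1) / (4 * √3), (w.1 + w.2.1) / 2, w.2.2 / (6 * √3)),
    isLocalDiffeoAt_of_inverse (Φ' := fun q => (q.1 + √3 * q.2, √3 * q.2 - q.1)) (by fun_prop)
      (by fun_prop) (fun x => ?_) (fun x => ?_) _, by simp,
    isLocalDiffeoAt_of_inverse
      (Φ' := fun w => (w.2.1 + 2 * √3 * w.1, w.2.1 - 2 * √3 * w.1, 6 * √3 * w.2.2)) (by fun_prop)
      (by fun_prop) (fun x => ?_) (fun x => ?_) _, by simp [sumOfCusps, fD4p],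
    .of_forall fun x => ?_⟩
  iterate 4 ext <;> simp <;> field_simp <;> ring
  simp only [sumOfCusps, fD4p, Prod.mk.injEq]
  refine ⟨by field_simp; ring, ?_, ?_⟩ <;> field_simp <;> rw [hsq] <;> ring

theorem aEquiv_sumOfCusps_of_unit {f : R2 → R3} {c d : R2 → ℝ} (hc : ContDiff ℝ ∞ c)
    (hd : ContDiff ℝ ∞ d) (hc₀ : c 0 ≠ 0) (hd₀ : d 0 ≠ 0)
    (hf : ∀ᶠ q in 𝓝 (0 : R2), f q = (q.1 ^ 2, q.2 ^ 2,
      q.1 ^ 3 * c (q.1 ^ 2, q.2 ^ 2) + q.2 ^ 3 * d (q.1 ^ 2, q.2 ^ 2))) :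
    AEquiv f 0 sumOfCusps 0 := by
  obtain ⟨r, hr, hr₀, hrc⟩ := exists_contDiff_pow_three_eq hc hc₀
  obtain ⟨s, hs, hs₀, hsd⟩ := exists_contDiff_pow_three_eq hd hd₀
  have hf₀ : f 0 = 0 := hf.self_of_nhds.trans (by simp)
  have hrcont := hr.continuous
  have hscont := hs.continuous
  refine ⟨fun q => (q.1 * r (q.1 ^ 2, q.2 ^ 2), q.2 * s (q.1 ^ 2, q.2 ^ 2)),
    fun w => (w.1 * r (w.1, w.2.1) ^ 2, w.2.1 * s (w.1, w.2.1) ^ 2, w.2.2),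
    isLocalDiffeoAt_mul_mul (r := fun q => r (q.1 ^ 2, q.2 ^ 2))
      (s := fun q => s (q.1 ^ 2, q.2 ^ 2)) (by fun_prop) (by fun_prop)
      (by simpa [Prod.mk_zero_zero] using hr₀) (by simpa [Prod.mk_zero_zero] using hs₀), by simp,
    hf₀ ▸ isLocalDiffeoAt_zero_of_map_smul (by fun_prop)
      (fun v t => (v.1 * r (t * v.1, t * v.2.1) ^ 2, v.2.1 * s (t * v.1, t * v.2.1) ^ 2, v.2.2))
      (by fun_prop) (fun v t => by simp [mul_assoc]) fun v hv => by
        simpa [hr₀, hs₀, Prod.ext_iff, Prod.mk_zero_zero] using hv,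
    by simp [hf₀, sumOfCusps], ?_⟩
  filter_upwards [hf, tendsto_sq_sq.eventually hrc, tendsto_sq_sq.eventually hsd] with q hf hr hs
  simp only [hf, ← hr, ← hs, sumOfCusps, Prod.mk.injEq]
  exact ⟨by ring, by ring, by ring⟩

theorem aEquiv_sumOfCusps_of_mul_cubes {f : R2 → R3} {c d e : R2 → ℝ} (hc : ContDiff ℝ ∞ c)
    (hd : ContDiff ℝ ∞ d) (he : ContDiff ℝ ∞ e) (hc₀ : c 0 ≠ 0) (hd₀ : d 0 ≠ 0)
    (hf : ∀ᶠ q in 𝓝 (0 : R2), f q = (q.1 ^ 2, q.2 ^ 2, q.1 ^ 3 * c (q.1 ^ 2, q.2 ^ 2) +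
      q.2 ^ 3 * d (q.1 ^ 2, q.2 ^ 2) + q.1 ^ 3 * q.2 ^ 3 * e (q.1 ^ 2, q.2 ^ 2))) :
    AEquiv f 0 sumOfCusps 0 := by
  obtain ⟨k, hk, hke⟩ := exists_contDiff_mul_eq (x₀ := 0) he (hc.mul (hd.const_smul (2 : ℝ)))
    (by simp [hc₀, hd₀])
  have hf₀ : f 0 = 0 := hf.self_of_nhds.trans (by simp)
  -- Since `2 c d k = e`, the cross term of `k (u³c + v³d + u³v³e)²` cancels `u³v³e`.
  let sq : R2 → ℝ := fun z => z.1 ^ 3 * c z ^ 2 + z.2 ^ 3 * d z ^ 2 + z.1 ^ 3 * z.2 ^ 3 * e z ^ 2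
  have hsq : ContDiff ℝ ∞ sq := by fun_prop
  let Ψ : R3 → R3 := fun w =>
    (w.1, w.2.1, w.2.2 - k (w.1, w.2.1) * w.2.2 ^ 2 + k (w.1, w.2.1) * sq (w.1, w.2.1))
  have hΨ : IsLocalDiffeoAt Ψ (f 0) := by
    have := hc.continuous
    have := hd.continuous
    have := he.continuous
    have := hk.continuous
    refine hf₀ ▸ isLocalDiffeoAt_zero_of_map_smul (by fun_prop)
      (fun v t => (v.1, v.2.1, v.2.2 - t * k (t * v.1, t * v.2.1) * v.2.2 ^ 2 +
        t ^ 2 * k (t * v.1, t * v.2.1) * (v.1 ^ 3 * c (t * v.1, t * v.2.1) ^ 2 +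
          v.2.1 ^ 3 * d (t * v.1, t * v.2.1) ^ 2 +
          t ^ 3 * v.1 ^ 3 * v.2.1 ^ 3 * e (t * v.1, t * v.2.1) ^ 2)))
      (by fun_prop) (fun v t => ?_) fun v hv => by simpa [Prod.ext_iff] using hv
    simp only [Ψ, sq, Prod.smul_fst, Prod.smul_snd, smul_eq_mul, Prod.smul_mk, Prod.mk.injEq,
      true_and]
    ring
  refine (AEquiv.of_target hΨ (.of_forall fun _ => rfl)).trans (aEquiv_sumOfCusps_of_unit
    (c := fun z => c z - 2 * k z * d z * e z * z.2 ^ 3)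
    (d := fun z => d z - 2 * k z * c z * e z * z.1 ^ 3) (by fun_prop) (by fun_prop)
    (by simpa using hc₀) (by simpa using hd₀) ?_)
  filter_upwards [hf, tendsto_sq_sq.eventually hke] with q hf hke
  simp only [hf, Ψ, sq, Prod.mk.injEq, true_and]
  simp only [smul_eq_mul] at hke
  linear_combination (-(q.1 ^ 3 * q.2 ^ 3)) * hke

theorem aEquiv_sumOfCusps_of_even_odd {f : R2 → R3} {a c d e : R2 → ℝ} (ha : ContDiff ℝ ∞ a)
    (hc : ContDiff ℝ ∞ c) (hd : ContDiff ℝ ∞ d) (he : ContDiff ℝ ∞ e) (hc₀ : c 0 ≠ 0)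
    (hd₀ : d 0 ≠ 0) (hf : ∀ᶠ q in 𝓝 (0 : R2), f q = (q.1 ^ 2, q.2 ^ 2, a (q.1 ^ 2, q.2 ^ 2) +
      q.1 ^ 3 * c (q.1 ^ 2, q.2 ^ 2) + q.2 ^ 3 * d (q.1 ^ 2, q.2 ^ 2) +
      q.1 ^ 3 * q.2 ^ 3 * e (q.1 ^ 2, q.2 ^ 2))) :
    AEquiv f 0 sumOfCusps 0 := by
  have hshear : IsLocalDiffeoAt (fun w : R3 => (w.1, w.2.1, w.2.2 - a (w.1, w.2.1))) (f 0) :=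
    isLocalDiffeoAt_of_inverse (Φ' := fun w : R3 => (w.1, w.2.1, w.2.2 + a (w.1, w.2.1)))
      (by fun_prop) (by fun_prop) (fun w => by simp) (fun w => by simp) _
  refine (AEquiv.of_target hshear (.of_forall fun _ => rfl)).trans
    (aEquiv_sumOfCusps_of_mul_cubes hc hd he hc₀ hd₀ ?_)
  filter_upwards [hf] with q hf
  simp only [hf, Prod.mk.injEq, true_and]
  ring

theorem eventually_eq_zero_of_ne {g : ℝ → ℝ} (hg : ContinuousAt g 0)
    (h : ∀ᶠ t in 𝓝 (0 : ℝ), t ≠ 0 → g t = 0) : ∀ᶠ t in 𝓝 (0 : ℝ), g t = 0 := by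
  have h' : g =ᶠ[𝓝[≠] 0] fun _ => 0 := eventually_nhdsWithin_iff.2 h
  have h₀ : g 0 = 0 := tendsto_nhds_unique_of_eventuallyEq
    (hg.tendsto.mono_left nhdsWithin_le_nhds) tendsto_const_nhds h'
  filter_upwards [h] with t ht
  exact (eq_or_ne t 0).elim (fun ht₀ => ht₀ ▸ h₀) ht

theorem hasDerivAt_comp_sq {g : R2 → ℝ} (hg : ContDiff ℝ ∞ g) (x : ℝ) :
    HasDerivAt (fun t : ℝ => g (x, t ^ 2)) 0 0 := by
  have hpair : HasDerivAt (fun t : ℝ => (x, t ^ 2)) (0 : R2) 0 := by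
    simpa [Prod.mk_zero_zero] using (hasDerivAt_const (0 : ℝ) x).prodMk (hasDerivAt_pow 2 (0 : ℝ))
  exact ((hg.differentiable (by simp) _).hasFDerivAt.comp_hasDerivAt 0 hpair).congr_deriv
    (map_zero _)

theorem tendsto_neg_zero : Tendsto (fun s : ℝ => -s) (𝓝 0) (𝓝 0) :=
  continuous_neg.tendsto' _ _ neg_zero

/-- The germ of `h` is critical in the second variable along the first axis, where its leading term
is `c s³`. This is the shape of the third coordinate of a cuspidal edge whose singular curve is
itself a cusp. -/
structure HasCuspidalAxis (h : R2 → ℝ) (c : ℝ) : Prop where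
  fderiv_eq_zero : ∀ᶠ s in 𝓝 (0 : ℝ), fderiv ℝ h (s, 0) (0, 1) = 0
  tendsto_div_cube : Tendsto (fun s : ℝ => h (s, 0) / s ^ 3) (𝓝[≠] 0) (𝓝 c)

theorem HasCuspidalAxis.odd_parts_eq_zero {h a b c d : R2 → ℝ} {l : ℝ} (hl : HasCuspidalAxis h l)
    (hh : ContDiff ℝ ∞ h) (ha : ContDiff ℝ ∞ a) (hb : ContDiff ℝ ∞ b) (hc : ContDiff ℝ ∞ c)
    (hd : ContDiff ℝ ∞ d) (hW : ∀ᶠ q in 𝓝 (0 : R2), h q = a (q.1 ^ 2, q.2 ^ 2) +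
      q.1 * b (q.1 ^ 2, q.2 ^ 2) + q.2 * c (q.1 ^ 2, q.2 ^ 2) + q.1 * q.2 * d (q.1 ^ 2, q.2 ^ 2)) :
    (∀ᶠ s in 𝓝 (0 : ℝ), c (s ^ 2, 0) = 0) ∧ ∀ᶠ s in 𝓝 (0 : ℝ), d (s ^ 2, 0) = 0 := by
  have hsum : ∀ᶠ s in 𝓝 (0 : ℝ), c (s ^ 2, 0) + s * d (s ^ 2, 0) = 0 := by
    filter_upwards [(show ∀ᶠ q in 𝓝 ((0 : ℝ), (0 : ℝ)), _ from hW).curry_nhds, hl.fderiv_eq_zero]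
      with s hs hfd
    have hline : HasDerivAt (fun t : ℝ => (s, t)) ((0 : ℝ), (1 : ℝ)) 0 :=
      (hasDerivAt_const _ _).prodMk (hasDerivAt_id _)
    have hleft := (hh.differentiable (by simp) (s, 0)).hasFDerivAt.comp_hasDerivAt 0 hline
    have hright := (((hasDerivAt_comp_sq ha (s ^ 2)).add
      ((hasDerivAt_comp_sq hb (s ^ 2)).const_mul s)).add
      ((hasDerivAt_id (0 : ℝ)).mul (hasDerivAt_comp_sq hc (s ^ 2)))).add
      (((hasDerivAt_id (0 : ℝ)).const_mul s).mul (hasDerivAt_comp_sq hd (s ^ 2)))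
    have := (hright.congr_of_eventuallyEq (f₁ := fun t => h (s, t)) hs).unique hleft
    simpa [hfd] using this
  have hdiff : ∀ᶠ s in 𝓝 (0 : ℝ), c (s ^ 2, 0) - s * d (s ^ 2, 0) = 0 :=
    (tendsto_neg_zero.eventually hsum).mono fun s hs => by
      rwa [neg_sq, neg_mul, ← sub_eq_add_neg] at hs
  have := hd.continuous
  refine ⟨by filter_upwards [hsum, hdiff] with s h₁ h₂; linarith,
    eventually_eq_zero_of_ne (by fun_prop) ?_⟩
  filter_upwards [hsum, hdiff] with s h₁ h₂ hs
  exact (mul_eq_zero.1 (by linarith : s * d (s ^ 2, 0) = 0)).resolve_left hs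

theorem HasCuspidalAxis.odd_coeff_eq {h : R2 → ℝ} {l : ℝ} {a b : ℝ → ℝ} (hl : HasCuspidalAxis h l)
    (hb : Continuous b)
    (hab : ∀ᶠ s in 𝓝 (0 : ℝ), h (s, 0) = a (s ^ 2) + s ^ 3 * b (s ^ 2)) : b 0 = l := by
  have hneg : Tendsto (fun s : ℝ => -s) (𝓝[≠] 0) (𝓝[≠] 0) :=
    tendsto_nhdsWithin_iff.2 ⟨tendsto_neg_zero.mono_left nhdsWithin_le_nhds,
      eventually_mem_nhdsWithin.mono fun s hs => neg_ne_zero.2 hs⟩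
  have hodd := (hl.tendsto_div_cube.add (hl.tendsto_div_cube.comp hneg)).div_const 2
  rw [add_self_div_two] at hodd
  refine tendsto_nhds_unique (((hb.comp (continuous_pow 2)).tendsto' 0 (b 0) (by simp)).mono_left
    nhdsWithin_le_nhds) (hodd.congr' ?_)
  filter_upwards [hab.filter_mono nhdsWithin_le_nhds, (tendsto_neg_zero.eventually hab).filter_mono
    nhdsWithin_le_nhds, eventually_mem_nhdsWithin] with s h₁ h₂ (hs : s ≠ 0)
  simp only [Function.comp, h₁, h₂, neg_sq]
  field_simp
  ring

theorem exists_eq_sq_mul_of_snd {g : R2 → ℝ} (hg : ContDiff ℝ ∞ g)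
    (h : ∀ᶠ s in 𝓝 (0 : ℝ), g (s ^ 2, 0) = 0) : ∃ k : R2 → ℝ, ContDiff ℝ ∞ k ∧
      ∀ᶠ q in 𝓝 (0 : R2), g (q.1 ^ 2, q.2 ^ 2) = q.2 ^ 2 * k (q.1 ^ 2, q.2 ^ 2) := by
  obtain ⟨k, hk, hgk⟩ := exists_eventually_eq_add_smul hg 0
  refine ⟨k, hk, ?_⟩
  filter_upwards [tendsto_sq_sq.eventually hgk, (continuous_fst.tendsto (0 : R2)).eventually h]
    with q hq h₀
  rw [hq, h₀, zero_add, smul_eq_mul]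

theorem exists_eq_sq_mul_of_fst {g : R2 → ℝ} (hg : ContDiff ℝ ∞ g)
    (h : ∀ᶠ s in 𝓝 (0 : ℝ), g (0, s ^ 2) = 0) : ∃ k : R2 → ℝ, ContDiff ℝ ∞ k ∧
      ∀ᶠ q in 𝓝 (0 : R2), g (q.1 ^ 2, q.2 ^ 2) = q.1 ^ 2 * k (q.1 ^ 2, q.2 ^ 2) := by
  obtain ⟨k, hk, hgk⟩ := exists_eq_sq_mul_of_snd (hg.comp contDiff_swap) h
  exact ⟨k ∘ Prod.swap, hk.comp contDiff_swap, tendsto_swap_zero.eventually hgk⟩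

theorem exists_even_odd_of_hasCuspidalAxis {h : R2 → ℝ} {l m : ℝ} (hh : ContDiff ℝ ∞ h)
    (hl : HasCuspidalAxis h l) (hm : HasCuspidalAxis (h ∘ Prod.swap) m) :
    ∃ a b c d : R2 → ℝ, ContDiff ℝ ∞ a ∧ ContDiff ℝ ∞ b ∧ ContDiff ℝ ∞ c ∧ ContDiff ℝ ∞ d ∧
      ∀ᶠ q in 𝓝 (0 : R2), h q = a (q.1 ^ 2, q.2 ^ 2) + q.1 ^ 3 * b (q.1 ^ 2, q.2 ^ 2) +
        q.2 ^ 3 * c (q.1 ^ 2, q.2 ^ 2) + q.1 ^ 3 * q.2 ^ 3 * d (q.1 ^ 2, q.2 ^ 2) := by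
  obtain ⟨a, b, c, d, ha, hb, hc, hd, hW⟩ := exists_eventually_eq_even_odd hh
  obtain ⟨hc₀, hd₀⟩ := hl.odd_parts_eq_zero hh ha hb hc hd hW
  obtain ⟨hb₀, hd₀'⟩ := hm.odd_parts_eq_zero (hh.comp contDiff_swap) (ha.comp contDiff_swap)
    (hc.comp contDiff_swap) (hb.comp contDiff_swap) (hd.comp contDiff_swap) (by
      filter_upwards [tendsto_swap_zero.eventually hW] with q hq
      simp only [Function.comp, hq, Prod.swap_prod_mk, Prod.fst_swap, Prod.snd_swap]
      ring)
  obtain ⟨b₁, hb₁, hbe⟩ := exists_eq_sq_mul_of_fst hb hb₀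
  obtain ⟨c₁, hc₁, hce⟩ := exists_eq_sq_mul_of_snd hc hc₀
  obtain ⟨d₁, hd₁, hde⟩ := exists_eq_sq_mul_of_snd hd hd₀
  have := hd₁.continuous
  have hd₁₀ : ∀ᶠ t in 𝓝 (0 : ℝ), d₁ (0, t ^ 2) = 0 := by
    refine eventually_eq_zero_of_ne (by fun_prop) ?_
    filter_upwards [hd₀', (tendsto_swap_zero.comp tendsto_mk_zero).eventually hde] with t h₁ h₂ ht
    simpa [show d (0, t ^ 2) = 0 from h₁, ht] using h₂
  obtain ⟨e, he, hee⟩ := exists_eq_sq_mul_of_fst hd₁ hd₁₀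
  refine ⟨a, b₁, c₁, e, ha, hb₁, hc₁, he, ?_⟩
  filter_upwards [hW, hbe, hce, hde, hee] with q hW hb hc hd he
  rw [hW, hb, hc, hd, he]
  ring

theorem aEquiv_sumOfCusps_of_hasCuspidalAxis {f : R2 → R3} {h : R2 → ℝ} {l m : ℝ}
    (hh : ContDiff ℝ ∞ h) (hf : ∀ᶠ q in 𝓝 (0 : R2), f q = (q.1 ^ 2, q.2 ^ 2, h q))
    (hl : HasCuspidalAxis h l) (hm : HasCuspidalAxis (h ∘ Prod.swap) m) (hl₀ : l ≠ 0)
    (hm₀ : m ≠ 0) : AEquiv f 0 sumOfCusps 0 := by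
  obtain ⟨a, b, c, d, ha, hb, hc, hd, habcd⟩ := exists_even_odd_of_hasCuspidalAxis hh hl hm
  have hbl : b (0, 0) = l := hl.odd_coeff_eq (a := fun x => a (x, 0)) (b := fun x => b (x, 0))
    (hb.continuous.comp (by fun_prop))
    ((tendsto_mk_zero.eventually habcd).mono fun s hs => by simpa using hs)
  have hcm : c (0, 0) = m := hm.odd_coeff_eq (a := fun x => a (0, x)) (b := fun x => c (0, x))
    (hc.continuous.comp (by fun_prop))
    (((tendsto_swap_zero.comp tendsto_mk_zero).eventually habcd).mono fun s hs => by
      simpa using hs)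
  refine aEquiv_sumOfCusps_of_even_odd ha hb hc hd (hbl.trans_ne hl₀) (hcm.trans_ne hm₀) ?_
  filter_upwards [hf, habcd] with q hf hq
  rw [hf, hq]

theorem nhdsNE_le_map_of_map_nhds {φ : ℝ → ℝ} (hφ : map φ (𝓝 0) = 𝓝 0) (h₀ : φ 0 = 0) :
    𝓝[≠] 0 ≤ map φ (𝓝[≠] 0) := fun s hs => by
  rw [mem_map, mem_nhdsWithin_iff_eventually] at hs
  rw [mem_nhdsWithin_iff_eventually, ← hφ, eventually_map]
  exact hs.mono fun u hu hne => hu fun h => hne (h ▸ h₀)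

theorem fderiv_eq_zero_of_hasDerivAt_comp {r s h : R2 → ℝ} {u : ℝ} (hr : ContDiff ℝ ∞ r)
    (hs : ContDiff ℝ ∞ s) (hh : ContDiff ℝ ∞ h) (hr₀ : r (u, 0) ≠ 0) (hs₀ : s (u, 0) ≠ 0)
    (hrv : HasDerivAt (fun v => (u * r (u, v)) ^ 2) 0 0)
    (hhv : HasDerivAt (fun v => h (u * r (u, v), v * s (u, v))) 0 0) :
    fderiv ℝ h (u * r (u, 0), 0) (0, 1) = 0 := by
  have hs_cont := hs.continuous
  have hfst : HasDerivAt (fun v => u * r (u, v)) 0 0 := by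
    rcases eq_or_ne u 0 with rfl | hu
    · simpa using hasDerivAt_const (0 : ℝ) (0 : ℝ)
    · have hd : DifferentiableAt ℝ (fun v => u * r (u, v)) 0 :=
        (by fun_prop : ContDiff ℝ ∞ fun v => u * r (u, v)).differentiable (by simp) 0
      have hsq := (hd.hasDerivAt.pow 2).unique hrv
      exact hd.hasDerivAt.congr_deriv (by simpa [hu, hr₀] using hsq)
  have hsnd : HasDerivAt (fun v => v * s (u, v)) (s (u, 0)) 0 :=
    hasDerivAt_smul_of_continuousAt (m := fun v => s (u, v)) (by fun_prop)
  have hfd := (hh.differentiable (by simp) (u * r (u, 0), 0 * s (u, 0))).hasFDerivAt.comp_hasDerivAt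
    (0 : ℝ) (hfst.prodMk hsnd)
  have hzero := hfd.unique hhv
  rw [zero_mul, show (0, s (u, 0)) = s (u, 0) • ((0 : ℝ), (1 : ℝ)) by simp, map_smul] at hzero
  exact (smul_eq_zero.1 hzero).resolve_left hs₀

theorem HasCuspidalAxis.of_comp {r s h : R2 → ℝ} {c : ℝ} (hr : ContDiff ℝ ∞ r)
    (hs : ContDiff ℝ ∞ s) (hh : ContDiff ℝ ∞ h) (hr₀ : r 0 ≠ 0) (hs₀ : s 0 ≠ 0)
    (hrv : ∀ᶠ u in 𝓝 (0 : ℝ), HasDerivAt (fun v => (u * r (u, v)) ^ 2) 0 0)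
    (hhv : ∀ᶠ u in 𝓝 (0 : ℝ), HasDerivAt (fun v => h (u * r (u, v), v * s (u, v))) 0 0)
    (hhu : Tendsto (fun u => h (u * r (u, 0), 0) / u ^ 3) (𝓝[≠] 0) (𝓝 c)) :
    HasCuspidalAxis h (c / r 0 ^ 3) := by
  have hr_cont := hr.continuous
  have hs_cont := hs.continuous
  have hrs : ∀ᶠ u : ℝ in 𝓝 0, r (u, 0) ≠ 0 ∧ s (u, 0) ≠ 0 :=
    tendsto_mk_zero.eventually ((hr_cont.continuousAt.eventually_ne hr₀).and
      (hs_cont.continuousAt.eventually_ne hs₀))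
  have hφ : map (fun u => u * r (u, 0)) (𝓝 0) = 𝓝 0 := by
    have hd : HasDerivAt (fun u => u * r (u, 0)) (r 0) 0 :=
      hasDerivAt_smul_of_continuousAt (m := fun u => r (u, 0)) (by fun_prop)
    have hc : ContDiff ℝ ∞ (fun u => u * r (u, 0)) := by fun_prop
    simpa using ((hc.contDiffAt (x := 0)).hasStrictDerivAt' hd (by simp)).map_nhds_eq hr₀
  constructor
  · rw [← hφ, eventually_map]
    filter_upwards [hrv, hhv, hrs] with u hrv hhv hrs
    exact fderiv_eq_zero_of_hasDerivAt_comp hr hs hh hrs.1 hrs.2 hrv hhv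
  · refine Tendsto.mono_left ?_ (nhdsNE_le_map_of_map_nhds hφ (zero_mul _))
    have hru : Tendsto (fun u : ℝ => r (u, 0) ^ 3) (𝓝[≠] 0) (𝓝 (r 0 ^ 3)) :=
      (Continuous.tendsto' (by fun_prop) _ _ rfl).mono_left nhdsWithin_le_nhds
    refine tendsto_map'_iff.2 ((hhu.div hru (pow_ne_zero 3 hr₀)).congr fun u => ?_)
    simp [mul_pow, div_div]

theorem hasDerivAt_comp_add_sq_smul {K : R3 → ℝ} {b : ℝ → R3} (hK : ContDiff ℝ ∞ K)
    (hb : ContDiff ℝ ∞ b) (x : R3) : HasDerivAt (fun v => K (x + v ^ 2 • b v)) 0 0 := by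
  have hsq : HasDerivAt (fun v => x + v ^ 2 • b v) 0 0 :=
    (((hasDerivAt_pow 2 (0 : ℝ)).fun_smul
      (hb.differentiable (by simp) 0).hasDerivAt).const_add x).congr_deriv (by simp)
  exact ((hK.differentiable (by simp) _).hasFDerivAt.comp_hasDerivAt 0 hsq).congr_deriv (map_zero _)

theorem hasCuspidalAxis_of_cusps {a b : ℝ → R3} {K L : R3 → ℝ} {r s h : R2 → ℝ} {c : ℝ}
    (hb : ContDiff ℝ ∞ b) (hK : ContDiff ℝ ∞ K) (hL : ContDiff ℝ ∞ L) (hr : ContDiff ℝ ∞ r)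
    (hs : ContDiff ℝ ∞ s) (hh : ContDiff ℝ ∞ h) (hr₀ : r 0 ≠ 0) (hs₀ : s 0 ≠ 0)
    (hKr : ∀ᶠ q in 𝓝 (0 : R2), (q.1 * r q) ^ 2 = K (q.1 ^ 2 • a q.1 + q.2 ^ 2 • b q.2))
    (hLh : ∀ᶠ q in 𝓝 (0 : R2),
      h (q.1 * r q, q.2 * s q) = L (q.1 ^ 2 • a q.1 + q.2 ^ 2 • b q.2))
    (hLa : Tendsto (fun u => L (u ^ 2 • a u) / u ^ 3) (𝓝[≠] 0) (𝓝 c)) :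
    HasCuspidalAxis h (c / r 0 ^ 3) := by
  refine .of_comp hr hs hh hr₀ hs₀ ?_ ?_ (hLa.congr' ?_)
  · filter_upwards [(show ∀ᶠ q in 𝓝 ((0 : ℝ), (0 : ℝ)), _ from hKr).curry_nhds] with u hu
    exact (hasDerivAt_comp_add_sq_smul hK hb _).congr_of_eventuallyEq hu
  · filter_upwards [(show ∀ᶠ q in 𝓝 ((0 : ℝ), (0 : ℝ)), _ from hLh).curry_nhds] with u hu
    exact (hasDerivAt_comp_add_sq_smul hL hb _).congr_of_eventuallyEq hu
  · filter_upwards [(tendsto_mk_zero.eventually hLh).filter_mono nhdsWithin_le_nhds] with u hu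
    simp only [zero_mul, ne_eq, OfNat.ofNat_ne_zero, not_false_eq_true, zero_pow, zero_smul,
      add_zero] at hu
    rw [hu]

theorem exists_mul_sq_eq_of_comp_eq_zero {K : R3 → ℝ} {a b : ℝ → R3} {c : ℝ} (hK : ContDiff ℝ ∞ K)
    (ha : ContDiff ℝ ∞ a) (hb : ContDiff ℝ ∞ b) (hKb : ∀ᶠ v in 𝓝 (0 : ℝ), K (v ^ 2 • b v) = 0)
    (hKa : HasDerivAt (fun s : ℝ => K (s • a 0)) c 0) (hc : 0 < c) :
    ∃ r : R2 → ℝ, ContDiff ℝ ∞ r ∧ r 0 ≠ 0 ∧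
      ∀ᶠ q in 𝓝 (0 : R2), (q.1 * r q) ^ 2 = K (q.1 ^ 2 • a q.1 + q.2 ^ 2 • b q.2) := by
  obtain ⟨k, hk, hKk⟩ := exists_eventually_eq_add_smul
    (h := fun z : R2 × ℝ => K (z.2 • a z.1.1 + z.1.2 ^ 2 • b z.1.2)) (by fun_prop) (0 : R2)
  have hk_cont := hk.continuous
  have hK₀ : K 0 = 0 := by simpa using hKb.self_of_nhds
  have hkc : k (0, 0) = c := by
    refine (hasDerivAt_smul_of_continuousAt (m := fun s => k (0, s)) (by fun_prop)).unique
      (hKa.congr_of_eventuallyEq ?_)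
    filter_upwards [(Continuous.tendsto' (by fun_prop) 0 _ rfl :
      Tendsto (fun s : ℝ => ((0 : R2), s)) (𝓝 0) (𝓝 (0, 0))).eventually hKk] with s hs
    simpa [hK₀] using hs.symm
  obtain ⟨r, hr, hr₀, hrk⟩ := exists_contDiff_pow_eq_of_pos (c := fun q : R2 => k (q, q.1 ^ 2))
    (x₀ := 0) (by fun_prop) (by simpa [hkc] using hc) two_ne_zero
  refine ⟨r, hr, hr₀, ?_⟩
  filter_upwards [hrk, (continuous_snd.tendsto (0 : R2)).eventually hKb,
    (Continuous.tendsto' (by fun_prop) 0 _ (by simp) :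
      Tendsto (fun q : R2 => (q, q.1 ^ 2)) (𝓝 0) (𝓝 (0, 0))).eventually hKk] with q hr hb hK
  simp only [hK, mul_pow, hr, zero_smul, zero_add, hb, smul_eq_mul]

theorem exists_eventually_eq_even_add_odd {g : ℝ → ℝ} (hg : ContDiff ℝ ∞ g) :
    ∃ a b : ℝ → ℝ, ContDiff ℝ ∞ a ∧ ContDiff ℝ ∞ b ∧
      ∀ᶠ s in 𝓝 (0 : ℝ), g s = a (s ^ 2) + s * b (s ^ 2) := by
  obtain ⟨a, b, c, d, ha, hb, -, -, h⟩ := exists_eventually_eq_even_odd (hg.comp contDiff_fst)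
  refine ⟨fun x => a (x, 0), fun x => b (x, 0), ha.comp (by fun_prop), hb.comp (by fun_prop), ?_⟩
  filter_upwards [tendsto_mk_zero.eventually h] with s hs
  simpa using hs

theorem exists_cube_mul_eq_of_cusp {κ : ℝ → ℝ} (hκ : ContDiff ℝ ∞ κ) (hκ₀ : 0 < κ 0) :
    ∃ r : ℝ → ℝ, ∀ g : ℝ → ℝ, ContDiff ℝ ∞ g →
      ∃ g₀ g₁ : ℝ → ℝ, ContDiff ℝ ∞ g₀ ∧ ContDiff ℝ ∞ g₁ ∧ (g₀ 0 = 0 → g 0 = 0) ∧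
        ∀ᶠ v in 𝓝 (0 : ℝ), v ^ 3 * g v =
          (v * r v) ^ 3 * g₀ (v ^ 2 * κ v) + (v ^ 2 * κ v) ^ 2 * g₁ (v ^ 2 * κ v) := by
  obtain ⟨r, hr, hr₀, hrκ⟩ := exists_contDiff_pow_eq_of_pos hκ hκ₀ two_ne_zero
  have hr_cont := hr.continuous
  have hloc : IsLocalDiffeoAt (fun v => v * r v) 0 :=
    isLocalDiffeoAt_zero_of_map_smul (by fun_prop) (fun v t => v * r (t * v)) (by fun_prop)
      (fun v t => by simp [mul_assoc]) fun v hv => by simpa [hr₀] using hv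
  obtain ⟨η, hη, hηl⟩ := hloc.exists_contDiff_leftInverse
  have hη₀ : η 0 = 0 := by simpa using hηl.self_of_nhds
  refine ⟨r, fun g hg => ?_⟩
  obtain ⟨k, hk, hkg⟩ := exists_contDiff_mul_eq hg (hr.pow 3) (pow_ne_zero 3 hr₀)
  obtain ⟨g₀, g₁, hg₀, hg₁, hkη⟩ := exists_eventually_eq_even_add_odd (hk.comp hη)
  refine ⟨g₀, g₁, hg₀, hg₁, fun h₀ => ?_, ?_⟩
  · have hk₀ : k 0 = 0 := by simpa [hη₀, h₀] using hkη.self_of_nhds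
    simpa [hk₀] using hkg.self_of_nhds.symm
  · have hφ : Tendsto (fun v => v * r v) (𝓝 0) (𝓝 0) :=
      Continuous.tendsto' (by fun_prop) _ _ (by simp)
    filter_upwards [hrκ, hkg, hηl, hφ.eventually hkη] with v hrκ hkg hηl hkη
    simp only [Function.comp, hηl] at hkη
    rw [← hkg, hkη, ← hrκ, ← mul_pow]
    ring

theorem exists_cusp_relation {β κ ζ : ℝ → ℝ} (hβ : ContDiff ℝ ∞ β) (hκ : ContDiff ℝ ∞ κ)
    (hζ : ContDiff ℝ ∞ ζ) (hκ₀ : 0 < κ 0) (hζ₀ : ζ 0 ≠ 0) :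
    ∃ P Q : ℝ → ℝ, ContDiff ℝ ∞ P ∧ ContDiff ℝ ∞ Q ∧ ∀ᶠ v in 𝓝 (0 : ℝ),
      v ^ 3 * β v = (v ^ 2 * κ v) ^ 2 * P (v ^ 2 * κ v) + Q (v ^ 2 * κ v) * (v ^ 3 * ζ v) := by
  obtain ⟨r, hcusp⟩ := exists_cube_mul_eq_of_cusp hκ hκ₀
  obtain ⟨β₀, β₁, hβ₀, hβ₁, -, hβe⟩ := hcusp β hβ
  obtain ⟨ζ₀, ζ₁, hζ₀', hζ₁, hζζ, hζe⟩ := hcusp ζ hζ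
  obtain ⟨Q, hQ, hQe⟩ := exists_contDiff_mul_eq (x₀ := 0) hβ₀ hζ₀' fun h => hζ₀ (hζζ h)
  refine ⟨fun x => β₁ x - Q x * ζ₁ x, Q, by fun_prop, hQ, ?_⟩
  have hκ_cont := hκ.continuous
  have hsq : Tendsto (fun v => v ^ 2 * κ v) (𝓝 0) (𝓝 0) :=
    Continuous.tendsto' (by fun_prop) _ _ (by simp)
  filter_upwards [hβe, hζe, hsq.eventually hQe] with v hβ hζ hQ
  rw [hβ, hζ, ← hQ]
  ring

theorem iteratedDeriv_succ_id_smul {F : Type*} [NormedAddCommGroup F] [NormedSpace ℝ F]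
    {k : ℝ → F} (hk : ContDiff ℝ ∞ k) (n : ℕ) :
    iteratedDeriv (n + 1) (fun t => t • k t) =
      fun t => t • iteratedDeriv (n + 1) k t + (n + 1 : ℝ) • iteratedDeriv n k t := by
  have hd (n : ℕ) (t : ℝ) : HasDerivAt (iteratedDeriv n k) (iteratedDeriv (n + 1) k t) t := by
    rw [iteratedDeriv_succ]
    exact (hk.differentiable_iteratedDeriv n (mod_cast ENat.natCast_lt_top n) t).hasDerivAt
  induction n with
  | zero =>
    ext t
    simpa using ((hasDerivAt_id t).fun_smul (hd 0 t)).deriv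
  | succ n ih =>
    rw [iteratedDeriv_succ, ih]
    ext t
    rw [(((hasDerivAt_id' t).fun_smul (hd (n + 1) t)).fun_add
      ((hd n t).fun_const_smul (n + 1 : ℝ))).deriv]
    push_cast
    module

section Taylor

variable {F : Type} [NormedAddCommGroup F] [NormedSpace ℝ F] [CompleteSpace F] {g : ℝ → F}

theorem exists_eventually_eq_add_id_smul (hg : ContDiff ℝ ∞ g) :
    ∃ k : ℝ → F, ContDiff ℝ ∞ k ∧
      (∀ n : ℕ, iteratedDeriv (n + 1) g 0 = (n + 1 : ℝ) • iteratedDeriv n k 0) ∧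
      ∀ᶠ t in 𝓝 (0 : ℝ), g t = g 0 + t • k t := by
  obtain ⟨k, hk, hgk⟩ := exists_eventually_eq_add_smul (hg.comp contDiff_snd) (0 : ℝ)
  have hk₀ : ContDiff ℝ ∞ fun t => k (0, t) := by fun_prop
  have hgk₀ : ∀ᶠ t in 𝓝 (0 : ℝ), g t = g 0 + t • k (0, t) :=
    (Continuous.tendsto' (by fun_prop) 0 _ rfl :
      Tendsto (fun t : ℝ => ((0 : ℝ), t)) (𝓝 0) (𝓝 (0, 0))).eventually hgk
  refine ⟨_, hk₀, fun n => ?_, hgk₀⟩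
  rw [Filter.EventuallyEq.iteratedDeriv_eq _ hgk₀, iteratedDeriv_const_add n.succ_pos,
    iteratedDeriv_succ_id_smul hk₀]
  simp

theorem exists_eventually_eq_add_sq_smul (hg : ContDiff ℝ ∞ g) (hg₀ : deriv g 0 = 0) :
    ∃ a : ℝ → F, ContDiff ℝ ∞ a ∧ iteratedDeriv 2 g 0 = (2 : ℝ) • a 0 ∧
      iteratedDeriv 3 g 0 = (6 : ℝ) • deriv a 0 ∧ ∀ᶠ t in 𝓝 (0 : ℝ), g t = g 0 + t ^ 2 • a t := by
  obtain ⟨k, hk, hgk, hk_eq⟩ := exists_eventually_eq_add_id_smul hg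
  obtain ⟨a, ha, hka, ha_eq⟩ := exists_eventually_eq_add_id_smul hk
  have hk₀ : k 0 = 0 := by simpa [hg₀] using (hgk 0).symm
  refine ⟨a, ha, ?_, ?_, ?_⟩
  · rw [hgk 1, hka 0, iteratedDeriv_zero, smul_smul]
    norm_num
  · rw [hgk 2, hka 1, iteratedDeriv_one, smul_smul]
    norm_num
  · filter_upwards [hk_eq, ha_eq] with t hkt hat
    rw [hkt, hat, hk₀, zero_add, smul_smul, sq]

end Taylor

theorem exists_quadratic_cusp_equation {x y z : ℝ → ℝ} (hx : ContDiff ℝ ∞ x)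
    (hy : ContDiff ℝ ∞ y) (hz : ContDiff ℝ ∞ z) (hx₀ : x 0 = 1) (hy₀ : y 0 = 0) (hz₀ : z 0 = 0)
    (hz' : deriv z 0 ≠ 0) :
    ∃ P Q : ℝ → ℝ, ContDiff ℝ ∞ P ∧ ContDiff ℝ ∞ Q ∧ ∀ᶠ u in 𝓝 (0 : ℝ),
      u ^ 2 * y u = (u ^ 2 * x u) ^ 2 * P (u ^ 2 * x u) + Q (u ^ 2 * x u) * (u ^ 2 * z u) := by
  obtain ⟨β, hβ, -, hyβ⟩ := exists_eventually_eq_add_id_smul hy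
  obtain ⟨ζ, hζ, hzζ, hzζ_eq⟩ := exists_eventually_eq_add_id_smul hz
  have hζ₀ : ζ 0 = deriv z 0 := by simpa using (hzζ 0).symm
  obtain ⟨P, Q, hP, hQ, hPQ⟩ := exists_cusp_relation hβ hx hζ (by simp [hx₀]) (hζ₀ ▸ hz')
  refine ⟨P, Q, hP, hQ, ?_⟩
  filter_upwards [hPQ, hyβ, hzζ_eq] with u hu hyu hzu
  rw [hyu, hzu, hy₀, hz₀, zero_add, zero_add, smul_eq_mul, smul_eq_mul]
  linear_combination hu

theorem isLocalDiffeoAt_sub_cusps {P Q R S : ℝ → ℝ} (hP : ContDiff ℝ ∞ P) (hQ : ContDiff ℝ ∞ Q)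
    (hR : ContDiff ℝ ∞ R) (hS : ContDiff ℝ ∞ S) :
    IsLocalDiffeoAt (fun w : R3 => (w.1 - (w.2.1 ^ 2 * R w.2.1 + S w.2.1 * w.2.2),
      w.2.1 - (w.1 ^ 2 * P w.1 + Q w.1 * w.2.2), w.2.2)) 0 := by
  have hPc := hP.continuous
  have hQc := hQ.continuous
  have hRc := hR.continuous
  have hSc := hS.continuous
  refine isLocalDiffeoAt_zero_of_map_smul (by fun_prop) (fun w t =>
    (w.1 - (t * (w.2.1 ^ 2 * R (t * w.2.1)) + S (t * w.2.1) * w.2.2),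
      w.2.1 - (t * (w.1 ^ 2 * P (t * w.1)) + Q (t * w.1) * w.2.2), w.2.2))
    (by fun_prop) (fun w t => ?_) fun w hw => ?_
  · simp only [Prod.smul_fst, Prod.smul_snd, Prod.smul_mk, smul_eq_mul, Prod.mk.injEq]
    exact ⟨by ring, by ring, trivial⟩
  · simp only [zero_mul, zero_add, Prod.mk_eq_zero] at hw
    obtain ⟨h₁, h₂, h₃⟩ := hw
    exact Prod.ext (by simpa [h₃] using h₁) (Prod.ext (by simpa [h₃] using h₂) h₃)

theorem tendsto_sq_mul_div_cube {z : ℝ → ℝ} (hz : DifferentiableAt ℝ z 0) (h₀ : z 0 = 0) :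
    Tendsto (fun u => u ^ 2 * z u / u ^ 3) (𝓝[≠] 0) (𝓝 (deriv z 0)) := by
  refine hz.hasDerivAt.tendsto_slope.congr' ?_
  filter_upwards [self_mem_nhdsWithin] with u hu
  simp only [slope_def_field, h₀, sub_zero]
  field_simp [show u ≠ 0 from hu]

theorem aEquiv_squares {f : R2 → R3} {θ η : R2 → R2} {K L : R3 → ℝ}
    (hΨ : IsLocalDiffeoAt (fun w => (K w, L w, w.2.2)) (f 0)) (hθ : IsLocalDiffeoAt θ 0)
    (hθ₀ : θ 0 = 0) (hη : ∀ᶠ q in 𝓝 0, η (θ q) = q) (hK : ∀ᶠ q in 𝓝 0, (θ q).1 ^ 2 = K (f q))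
    (hL : ∀ᶠ q in 𝓝 0, (θ q).2 ^ 2 = L (f q)) :
    AEquiv f 0 (fun q => (q.1 ^ 2, q.2 ^ 2, (f (η q)).2.2)) 0 := by
  have h : ∀ᶠ q in 𝓝 0, (K (f q), L (f q), (f q).2.2) =
      ((θ q).1 ^ 2, (θ q).2 ^ 2, (f (η (θ q))).2.2) := by
    filter_upwards [hη, hK, hL] with q hη hK hL
    rw [hη, hK, hL]
  refine ⟨θ, _, hθ, hθ₀, hΨ, ?_, h⟩
  simpa [hθ₀] using h.self_of_nhds

section NormalizedCusps

variable {a b : ℝ → R3} (ha : ContDiff ℝ ∞ a) (hb : ContDiff ℝ ∞ b) (ha₀ : a 0 = (1, 0, 0))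
  (hb₀ : b 0 = (0, 1, 0)) (ha' : deriv (fun u => (a u).2.2) 0 ≠ 0)
  (hb' : deriv (fun v => (b v).2.2) 0 ≠ 0)

include ha hb ha₀ hb₀ ha' hb'

theorem exists_isLocalDiffeoAt_mul_sq_of_cusps :
    ∃ (K L : R3 → ℝ) (r s : R2 → ℝ), ContDiff ℝ ∞ K ∧ ContDiff ℝ ∞ L ∧
      IsLocalDiffeoAt (fun w => (K w, L w, w.2.2)) 0 ∧ ContDiff ℝ ∞ r ∧ ContDiff ℝ ∞ s ∧
      r 0 ≠ 0 ∧ s 0 ≠ 0 ∧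
      (∀ᶠ q in 𝓝 (0 : R2), (q.1 * r q) ^ 2 = K (q.1 ^ 2 • a q.1 + q.2 ^ 2 • b q.2)) ∧
      ∀ᶠ q in 𝓝 (0 : R2), (q.1 * s q) ^ 2 = L (q.1 ^ 2 • b q.1 + q.2 ^ 2 • a q.2) := by
  obtain ⟨P, Q, hP, hQ, hPQ⟩ := exists_quadratic_cusp_equation (x := fun u => (a u).1)
    (y := fun u => (a u).2.1) (by fun_prop) (by fun_prop) (by fun_prop) (by simp [ha₀])
    (by simp [ha₀]) (by simp [ha₀]) ha'
  obtain ⟨R, S, hR, hS, hRS⟩ := exists_quadratic_cusp_equation (x := fun v => (b v).2.1)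
    (y := fun v => (b v).1) (by fun_prop) (by fun_prop) (by fun_prop) (by simp [hb₀])
    (by simp [hb₀]) (by simp [hb₀]) hb'
  let K (w : R3) : ℝ := w.1 - (w.2.1 ^ 2 * R w.2.1 + S w.2.1 * w.2.2)
  let L (w : R3) : ℝ := w.2.1 - (w.1 ^ 2 * P w.1 + Q w.1 * w.2.2)
  have hK : ContDiff ℝ ∞ K := by fun_prop
  have hL : ContDiff ℝ ∞ L := by fun_prop
  obtain ⟨r, hr, hr₀, hrK⟩ := exists_mul_sq_eq_of_comp_eq_zero hK ha hb
    (hRS.mono fun v hv => sub_eq_zero.2 hv) (c := 1)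
    (by simpa [K, ha₀] using hasDerivAt_id' (0 : ℝ)) one_pos
  obtain ⟨s, hs, hs₀, hsL⟩ := exists_mul_sq_eq_of_comp_eq_zero hL hb ha
    (hPQ.mono fun u hu => sub_eq_zero.2 hu) (c := 1)
    (by simpa [L, hb₀] using hasDerivAt_id' (0 : ℝ)) one_pos
  exact ⟨K, L, r, s, hK, hL, isLocalDiffeoAt_sub_cusps hP hQ hR hS, hr, hs, hr₀, hs₀, hrK, hsL⟩

theorem aEquiv_sumOfCusps_of_normalized :
    AEquiv (fun q => q.1 ^ 2 • a q.1 + q.2 ^ 2 • b q.2) 0 sumOfCusps 0 := by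
  obtain ⟨K, L, r, s, hK, hL, hΨ, hr, hs, hr₀, hs₀, hrK, hsL⟩ :=
    exists_isLocalDiffeoAt_mul_sq_of_cusps ha hb ha₀ hb₀ ha' hb'
  have hr_swap : ContDiff ℝ ∞ (r ∘ Prod.swap) := hr.comp contDiff_swap
  have hs_swap : ContDiff ℝ ∞ (s ∘ Prod.swap) := hs.comp contDiff_swap
  have hθ := isLocalDiffeoAt_mul_mul hr hs_swap hr₀ (show s (Prod.swap 0) ≠ 0 from hs₀)
  obtain ⟨η, hη, hηl⟩ := hθ.exists_contDiff_leftInverse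
  let h (q : R2) : ℝ := ((η q).1 ^ 2 • a (η q).1 + (η q).2 ^ 2 • b (η q).2).2.2
  have hh : ContDiff ℝ ∞ h := by fun_prop
  have hsmooth : ContDiff ℝ ∞ fun w : R3 => w.2.2 := by fun_prop
  have hl := hasCuspidalAxis_of_cusps hb hK hsmooth hr hs_swap hh hr₀ hs₀ hrK
    (hηl.mono fun q hq => by simp only [h, hq]) (tendsto_sq_mul_div_cube (z := fun u => (a u).2.2)
      (ContDiff.differentiable (by fun_prop) (n := ∞) (by simp) 0) (by simp [ha₀]))
  have hm := hasCuspidalAxis_of_cusps ha hL hsmooth hs hr_swap (hh.comp contDiff_swap) hs₀ hr₀ hsL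
    (by
      filter_upwards [tendsto_swap_zero.eventually hηl] with q hq
      simp only [Function.comp, Prod.fst_swap, Prod.snd_swap, Prod.swap_swap] at hq
      simp only [h, Function.comp, Prod.swap_prod_mk, hq, Prod.fst_swap, Prod.snd_swap, add_comm])
    (tendsto_sq_mul_div_cube (z := fun v => (b v).2.2)
      (ContDiff.differentiable (by fun_prop) (n := ∞) (by simp) 0) (by simp [hb₀]))
  have hsquares := aEquiv_squares (f := fun q => q.1 ^ 2 • a q.1 + q.2 ^ 2 • b q.2) (by simpa)
    hθ (by simp) hηl hrK (by
      filter_upwards [tendsto_swap_zero.eventually hsL] with q hq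
      rw [add_comm]
      exact hq)
  exact hsquares.trans (aEquiv_sumOfCusps_of_hasCuspidalAxis hh (.of_forall fun _ => rfl) hl hm
    (div_ne_zero ha' (pow_ne_zero 3 hr₀)) (div_ne_zero hb' (pow_ne_zero 3 hs₀)))

end NormalizedCusps

theorem exists_continuousLinearEquiv_of_det3_ne_zero {a b c : R3} (h : det3 a b c ≠ 0) :
    ∃ T : R3 ≃L[ℝ] R3, T a = (1, 0, 0) ∧ T b = (0, 1, 0) ∧
      ∀ w, (T w).2.2 = det3 a b w / det3 a b c := by
  let T : R3 ≃ₗ[ℝ] R3 :=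
    { toFun w := (det3 w b c / det3 a b c, det3 a w c / det3 a b c, det3 a b w / det3 a b c)
      invFun w := w.1 • a + w.2.1 • b + w.2.2 • c
      map_add' v w := by
        simp only [det3, Prod.fst_add, Prod.snd_add, Prod.mk_add_mk, Prod.mk.injEq]
        exact ⟨by ring, by ring, by ring⟩
      map_smul' t w := by
        simp only [det3, Prod.smul_fst, Prod.smul_snd, Prod.smul_mk, smul_eq_mul, Prod.mk.injEq,
          RingHom.id_apply]
        exact ⟨by ring, by ring, by ring⟩
      left_inv w := by
        refine Prod.ext ?_ (Prod.ext ?_ ?_) <;>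
        · simp only [Prod.fst_add, Prod.snd_add, Prod.smul_fst, Prod.smul_snd, smul_eq_mul]
          field_simp
          simp only [det3]
          ring
      right_inv w := by
        refine Prod.ext ?_ (Prod.ext ?_ ?_) <;>
        · rw [div_eq_iff h]
          simp only [det3, Prod.fst_add, Prod.snd_add, Prod.smul_fst, Prod.smul_snd, smul_eq_mul]
          ring }
  exact ⟨T.toContinuousLinearEquiv, T.eq_symm_apply.1 (by simp [T]),
    T.eq_symm_apply.1 (by simp [T]), fun w => rfl⟩

theorem deriv_snd_snd {k : ℝ → R3} {t : ℝ} (hk : DifferentiableAt ℝ k t) :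
    deriv (fun t => (k t).2.2) t = (deriv k t).2.2 :=
  (((ContinuousLinearMap.snd ℝ ℝ ℝ).comp
    (ContinuousLinearMap.snd ℝ ℝ R2)).hasFDerivAt.comp_hasDerivAt t hk.hasDerivAt).deriv

theorem aEquiv_sumOfCusps_of_det3_ne_zero {a b : ℝ → R3} (ha : ContDiff ℝ ∞ a)
    (hb : ContDiff ℝ ∞ b) (hdet_a : det3 (a 0) (b 0) (deriv a 0) ≠ 0)
    (hdet_b : det3 (a 0) (b 0) (deriv b 0) ≠ 0) :
    AEquiv (fun q => q.1 ^ 2 • a q.1 + q.2 ^ 2 • b q.2) 0 sumOfCusps 0 := by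
  obtain ⟨T, hTa, hTb, hT⟩ := exists_continuousLinearEquiv_of_det3_ne_zero hdet_a
  have hderiv {c : ℝ → R3} (hc : ContDiff ℝ ∞ c) (hdet : det3 (a 0) (b 0) (deriv c 0) ≠ 0) :
      deriv (fun t => (T (c t)).2.2) 0 ≠ 0 := by
    have hTc : HasDerivAt (fun t => T (c t)) (T (deriv c 0)) 0 :=
      T.hasFDerivAt.comp_hasDerivAt 0 (hc.differentiable (by simp) 0).hasDerivAt
    rw [deriv_snd_snd hTc.differentiableAt, hTc.deriv, hT]
    exact div_ne_zero hdet hdet_a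
  refine .trans (.of_target (isLocalDiffeoAt_of_inverse T.contDiff T.symm.contDiff
    T.symm_apply_apply T.apply_symm_apply _) (.of_forall fun q => ?_))
    (aEquiv_sumOfCusps_of_normalized (T.contDiff.comp ha) (T.contDiff.comp hb) hTa hTb
      (hderiv ha hdet_a) (hderiv hb hdet_b))
  simp [map_add, map_smul]

/-! ### Jets -/

section Jets

variable {E F : Type*} [NormedAddCommGroup E] [NormedSpace ℝ E] [NormedAddCommGroup F]
  [NormedSpace ℝ F]

theorem deriv_clm_apply_of_eq_zero {D : ℝ → E →L[ℝ] F} {u : ℝ → E} (hD : ContDiff ℝ ∞ D)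
    (hu : ContDiff ℝ ∞ u) (hD₀ : deriv D 0 = 0) (hu₀ : u 0 = 0) :
    deriv (fun t => D t (u t)) 0 = D 0 (deriv u 0) ∧
      deriv (deriv fun t => D t (u t)) 0 = D 0 (deriv (deriv u) 0) := by
  have hD' : ContDiff ℝ ∞ (deriv D) := hD.deriv'
  have hu' : ContDiff ℝ ∞ (deriv u) := hu.deriv'
  have hderiv (t : ℝ) : HasDerivAt (fun t => D t (u t)) (deriv D t (u t) + D t (deriv u t)) t :=
    (hD.differentiable (by simp) t).hasDerivAt.clm_apply (hu.differentiable (by simp) t).hasDerivAt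
  refine ⟨by simp [(hderiv 0).deriv, hu₀], ?_⟩
  have hderiv₂ := ((hD'.differentiable (by simp) 0).hasDerivAt.clm_apply
    (hu.differentiable (by simp) 0).hasDerivAt).fun_add
    ((hD.differentiable (by simp) 0).hasDerivAt.clm_apply
      (hu'.differentiable (by simp) 0).hasDerivAt)
  rw [funext fun t => (hderiv t).deriv]
  simpa [hu₀, hD₀] using hderiv₂.deriv

theorem iteratedDeriv_comp_of_deriv_eq_zero {Ψ : E → F} {γ : ℝ → E} (hΨ : ContDiff ℝ ∞ Ψ)
    (hγ : ContDiff ℝ ∞ γ) (hγ₀ : deriv γ 0 = 0) :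
    iteratedDeriv 2 (Ψ ∘ γ) 0 = fderiv ℝ Ψ (γ 0) (iteratedDeriv 2 γ 0) ∧
      iteratedDeriv 3 (Ψ ∘ γ) 0 = fderiv ℝ Ψ (γ 0) (iteratedDeriv 3 γ 0) := by
  have hΨ' : ContDiff ℝ ∞ (fderiv ℝ Ψ) := hΨ.fderiv_right (by simp)
  have hγ' (t : ℝ) : HasDerivAt γ (deriv γ t) t := (hγ.differentiable (by simp) t).hasDerivAt
  have hD : deriv (fun t => fderiv ℝ Ψ (γ t)) 0 = 0 := by
    rw [← map_zero (fderiv ℝ (fderiv ℝ Ψ) (γ 0)), ← hγ₀]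
    exact ((hΨ'.differentiable (by simp) (γ 0)).hasFDerivAt.comp_hasDerivAt 0 (hγ' 0)).deriv
  have hchain : deriv (Ψ ∘ γ) = fun t => fderiv ℝ Ψ (γ t) (deriv γ t) := funext fun t =>
    ((hΨ.differentiable (by simp) (γ t)).hasFDerivAt.comp_hasDerivAt t (hγ' t)).deriv
  simpa only [iteratedDeriv_succ, iteratedDeriv_zero, hchain, Function.comp] using
    deriv_clm_apply_of_eq_zero (hΨ'.comp hγ) hγ.deriv' hD hγ₀

theorem iteratedDeriv_sq_smul {k : ℝ → F} (hk : ContDiff ℝ ∞ k) :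
    deriv (fun t : ℝ => t ^ 2 • k t) 0 = 0 ∧
      iteratedDeriv 2 (fun t : ℝ => t ^ 2 • k t) 0 = (2 : ℝ) • k 0 ∧
      iteratedDeriv 3 (fun t : ℝ => t ^ 2 • k t) 0 = (6 : ℝ) • deriv k 0 := by
  have h (n : ℕ) : iteratedDeriv (n + 1) (fun t : ℝ => t ^ 2 • k t) 0 =
      (n + 1 : ℝ) • iteratedDeriv n (fun t => t • k t) 0 := by
    simp only [sq, mul_smul]
    rw [iteratedDeriv_succ_id_smul (k := fun t => t • k t) (by fun_prop)]
    simp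
  refine ⟨by simpa using h 0, ?_, ?_⟩
  · rw [h 1, iteratedDeriv_succ_id_smul hk]
    norm_num
  · rw [h 2, iteratedDeriv_succ_id_smul hk]
    norm_num [smul_smul]

end Jets

theorem iteratedDeriv_sumOfCusps_comp {φ : ℝ → R2} (hφ : ContDiff ℝ ∞ φ) (hφ₀ : φ 0 = 0) :
    deriv (sumOfCusps ∘ φ) 0 = 0 ∧
      iteratedDeriv 2 (sumOfCusps ∘ φ) 0 =
        (2 : ℝ) • ((deriv φ 0).1 ^ 2, (deriv φ 0).2 ^ 2, (0 : ℝ)) ∧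
      (iteratedDeriv 3 (sumOfCusps ∘ φ) 0).2.2 =
        6 * ((deriv φ 0).1 ^ 3 + (deriv φ 0).2 ^ 3) := by
  obtain ⟨n, hn, hφn, hφn_eq⟩ := exists_eventually_eq_add_id_smul hφ
  have hn₀ : deriv φ 0 = n 0 := by simpa using hφn 0
  let k (t : ℝ) : R3 := ((n t).1 ^ 2, (n t).2 ^ 2, t • ((n t).1 ^ 3 + (n t).2 ^ 3))
  have hk : ContDiff ℝ ∞ k := by fun_prop
  have hn_cont := hn.continuous
  have hk' : (deriv k 0).2.2 = (n 0).1 ^ 3 + (n 0).2 ^ 3 := by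
    rw [← deriv_snd_snd (hk.differentiable (by simp) 0)]
    exact (hasDerivAt_smul_of_continuousAt (by fun_prop)).deriv
  have heq : sumOfCusps ∘ φ =ᶠ[𝓝 0] fun t => t ^ 2 • k t := by
    filter_upwards [hφn_eq] with t ht
    simp only [Function.comp, sumOfCusps, ht, hφ₀, zero_add, k, Prod.smul_fst, Prod.smul_snd,
      Prod.smul_mk, smul_eq_mul, Prod.mk.injEq]
    exact ⟨by ring, by ring, by ring⟩
  obtain ⟨h₁, h₂, h₃⟩ := iteratedDeriv_sq_smul hk
  rw [heq.deriv_eq, heq.iteratedDeriv_eq, heq.iteratedDeriv_eq, h₁, h₂, h₃, hn₀]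
  exact ⟨rfl, by simp [k], by simp [hk']⟩

theorem AEquiv.exists_jet_sumOfCusps {f : R2 → R3} {p : R2} (hf : ContDiff ℝ ∞ f)
    (h : AEquiv f p sumOfCusps 0) :
    ∃ (M : R2 →L[ℝ] R2) (L : R3 →L[ℝ] R3), Function.Injective M ∧ ∀ x : R2,
      deriv (fun t : ℝ => f (p + t • x)) 0 = 0 ∧
      L (iteratedDeriv 2 (fun t : ℝ => f (p + t • x)) 0) =
        (2 : ℝ) • ((M x).1 ^ 2, (M x).2 ^ 2, (0 : ℝ)) ∧
      (L (iteratedDeriv 3 (fun t : ℝ => f (p + t • x)) 0)).2.2 =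
        6 * ((M x).1 ^ 3 + (M x).2 ^ 3) := by
  obtain ⟨Φ, Ψ, hΦ, hΦp, hΨ, -, hfΦ⟩ := h
  obtain ⟨Φ', hΦ', -, hΦΦ'⟩ := exists_contDiff_hasCompactSupport_eventuallyEq hΦ.contDiffAt
  obtain ⟨Ψ', hΨ', -, hΨΨ'⟩ := exists_contDiff_hasCompactSupport_eventuallyEq hΨ.contDiffAt
  have hM : Function.Injective (fderiv ℝ Φ' p) := by
    rw [hΦΦ'.fderiv_eq]
    exact hΦ.injective_fderiv
  have hL : Function.Injective (fderiv ℝ Ψ' (f p)) := by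
    rw [hΨΨ'.fderiv_eq]
    exact hΨ.injective_fderiv
  refine ⟨fderiv ℝ Φ' p, fderiv ℝ Ψ' (f p), hM, fun x => ?_⟩
  let γ (t : ℝ) : R3 := f (p + t • x)
  let φ (t : ℝ) : R2 := Φ' (p + t • x)
  have hγ : ContDiff ℝ ∞ γ := by fun_prop
  have hφ : ContDiff ℝ ∞ φ := by fun_prop
  have hγ₀ : γ 0 = f p := by simp [γ]
  have hφ' : deriv φ 0 = fderiv ℝ Φ' p x :=
    ((hΦ'.differentiable (by simp) p).hasFDerivAt.hasLineDerivAt x).deriv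
  have heq : Ψ' ∘ γ =ᶠ[𝓝 0] sumOfCusps ∘ φ := by
    have hline : Tendsto (fun t : ℝ => p + t • x) (𝓝 0) (𝓝 p) :=
      Continuous.tendsto' (by fun_prop) _ _ (by simp)
    filter_upwards [hline.eventually hfΦ, hline.eventually hΦΦ',
      (hf.continuous.continuousAt.tendsto.comp hline).eventually hΨΨ'] with t h₁ h₂ h₃
    simp only [Function.comp, γ, φ] at h₃ ⊢
    rw [h₃, h₁, h₂]
  obtain ⟨h₁, h₂, h₃⟩ := iteratedDeriv_sumOfCusps_comp hφ (by simp [φ, hΦΦ'.self_of_nhds, hΦp])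
  have hγ' : deriv γ 0 = 0 := by
    have := (hΨ'.differentiable (by simp) (γ 0)).hasFDerivAt.comp_hasDerivAt 0
      (hγ.differentiable (by simp) 0).hasDerivAt
    rw [← heq.deriv_eq, this.deriv, hγ₀] at h₁
    exact hL (h₁.trans (map_zero _).symm)
  obtain ⟨hΨ₂, hΨ₃⟩ := iteratedDeriv_comp_of_deriv_eq_zero hΨ' hγ hγ'
  rw [heq.iteratedDeriv_eq, hγ₀] at hΨ₂ hΨ₃
  rw [← hΨ₂, ← hΨ₃, ← hφ']
  exact ⟨hγ', h₂, h₃⟩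

theorem iteratedDeriv_add_comp_line {F : Type*} [NormedAddCommGroup F] [NormedSpace ℝ F]
    {A B : ℝ → F} {n : ℕ} (hA : ContDiff ℝ n A) (hB : ContDiff ℝ n B) (p x : R2) :
    iteratedDeriv n (fun t : ℝ => A (p + t • x).1 + B (p + t • x).2) 0 =
      x.1 ^ n • iteratedDeriv n A p.1 + x.2 ^ n • iteratedDeriv n B p.2 := by
  have hline {C : ℝ → F} (hC : ContDiff ℝ n C) (c y : ℝ) :
      iteratedDeriv n (fun t => C (c + t * y)) 0 = y ^ n • iteratedDeriv n C c := by
    simp only [mul_comm _ y]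
    rw [iteratedDeriv_comp_const_smul (f := fun t => C (c + t)) (by fun_prop),
      iteratedDeriv_comp_const_add]
    simp
  simp only [Prod.fst_add, Prod.snd_add, Prod.smul_fst, Prod.smul_snd, smul_eq_mul]
  rw [iteratedDeriv_fun_add (by fun_prop) (by fun_prop), hline hA, hline hB]

theorem det3_map (L : R3 →L[ℝ] R3) (a b c : R3) :
    det3 (L a) (L b) (L c) =
      det3 (L (1, 0, 0)) (L (0, 1, 0)) (L (0, 0, 1)) * det3 a b c := by
  have hL (w : R3) : L w = w.1 • L (1, 0, 0) + w.2.1 • L (0, 1, 0) + w.2.2 • L (0, 0, 1) := by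
    simp [← map_smul, ← map_add]
  rw [hL a, hL b, hL c]
  simp only [det3, Prod.fst_add, Prod.snd_add, Prod.smul_fst, Prod.smul_snd, smul_eq_mul]
  ring

theorem det2_map (M : R2 →L[ℝ] R2) (x y : R2) :
    det2 (M x) (M y) = det2 (M (1, 0)) (M (0, 1)) * det2 x y := by
  have hM (w : R2) : M w = w.1 • M (1, 0) + w.2 • M (0, 1) := by
    simp [← map_smul, ← map_add]
  rw [hM x, hM y]
  simp only [det2, Prod.fst_add, Prod.snd_add, Prod.smul_fst, Prod.smul_snd, smul_eq_mul]
  ring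

theorem det2_ne_zero_of_injective {M : R2 →L[ℝ] R2} (hM : Function.Injective M) :
    det2 (M (1, 0)) (M (0, 1)) ≠ 0 := by
  have hM' : Function.Surjective M := LinearMap.injective_iff_surjective.1 hM
  obtain ⟨x, hx⟩ := hM' (1, 0)
  obtain ⟨y, hy⟩ := hM' (0, 1)
  refine left_ne_zero_of_mul (b := det2 x y) ?_
  rw [← det2_map, hx, hy]
  simp [det2]

theorem det2_sq_ne_zero_and_cubes_ne_zero {x y : R2} (h₁ : x.1 * y.1 = 0) (h₂ : x.2 * y.2 = 0)
    (h : det2 x y ≠ 0) :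
    det2 (x.1 ^ 2, x.2 ^ 2) (y.1 ^ 2, y.2 ^ 2) ≠ 0 ∧ x.1 ^ 3 + x.2 ^ 3 ≠ 0 ∧
      y.1 ^ 3 + y.2 ^ 3 ≠ 0 := by
  rcases mul_eq_zero.1 h₁ with hx | hy <;> rcases mul_eq_zero.1 h₂ with hx' | hy' <;>
    simp_all [det2]

theorem AEquiv.det3_iteratedDeriv_ne_zero {A B : ℝ → R3} (hA : ContDiff ℝ ∞ A)
    (hB : ContDiff ℝ ∞ B) {p : R2} (h : AEquiv (fun q => A q.1 + B q.2) p sumOfCusps 0) :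
    deriv A p.1 = 0 ∧ deriv B p.2 = 0 ∧
      det3 (iteratedDeriv 2 A p.1) (iteratedDeriv 2 B p.2) (iteratedDeriv 3 A p.1) ≠ 0 ∧
      det3 (iteratedDeriv 2 A p.1) (iteratedDeriv 2 B p.2) (iteratedDeriv 3 B p.2) ≠ 0 := by
  obtain ⟨M, L, hM, hML⟩ := h.exists_jet_sumOfCusps (by fun_prop)
  have hjet (n : ℕ) (x : R2) :
      iteratedDeriv n (fun t : ℝ => A (p + t • x).1 + B (p + t • x).2) 0 =
        x.1 ^ n • iteratedDeriv n A p.1 + x.2 ^ n • iteratedDeriv n B p.2 :=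
    iteratedDeriv_add_comp_line (hA.of_le (by exact_mod_cast le_top))
      (hB.of_le (by exact_mod_cast le_top)) p x
  simp only [← iteratedDeriv_one, hjet] at hML ⊢
  obtain ⟨hA₁, hA₂, hA₃⟩ : _ ∧ L (iteratedDeriv 2 A p.1) = _ ∧ _ := by simpa using hML (1, 0)
  obtain ⟨hB₁, hB₂, hB₃⟩ : _ ∧ L (iteratedDeriv 2 B p.2) = _ ∧ _ := by simpa using hML (0, 1)
  have hM_add : M (1, 1) = M (1, 0) + M (0, 1) := by simp [← map_add]
  have hmixed : L (iteratedDeriv 2 A p.1) + L (iteratedDeriv 2 B p.2) =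
      (2 : ℝ) • (((M (1, 0) + M (0, 1)).1 ^ 2, (M (1, 0) + M (0, 1)).2 ^ 2, (0 : ℝ)) : R3) := by
    simpa [hM_add] using (hML (1, 1)).2.1
  simp only [hA₂, hB₂, Prod.fst_add, Prod.snd_add, Prod.mk_add_mk, Prod.smul_mk, smul_eq_mul,
    Prod.mk.injEq] at hmixed
  obtain ⟨hsq, hcube_A, hcube_B⟩ := det2_sq_ne_zero_and_cubes_ne_zero
    (by linarith) (by linarith) (det2_ne_zero_of_injective hM)
  have hdet {c : R3} (hc : (L c).2.2 ≠ 0) :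
      det3 (iteratedDeriv 2 A p.1) (iteratedDeriv 2 B p.2) c ≠ 0 := by
    refine right_ne_zero_of_mul (a := det3 (L (1, 0, 0)) (L (0, 1, 0)) (L (0, 0, 1))) ?_
    rw [← det3_map, hA₂, hB₂]
    convert mul_ne_zero (mul_ne_zero four_ne_zero hsq) hc using 1
    simp only [det3, det2]
    ring
  exact ⟨by simpa using hA₁, by simpa using hB₁, hdet (by simpa [hA₃] using hcube_A),
    hdet (by simpa [hB₃] using hcube_B)⟩

theorem det3_smul_smul_smul (r s t : ℝ) (a b c : R3) :
    det3 (r • a) (s • b) (t • c) = r * s * t * det3 a b c := by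
  simp only [det3, Prod.smul_fst, Prod.smul_snd, smul_eq_mul]
  ring

theorem aEquiv_sumOfCusps_of_iteratedDeriv {A B : ℝ → R3} (hA : ContDiff ℝ ∞ A)
    (hB : ContDiff ℝ ∞ B) {p : R2} (hA₁ : deriv A p.1 = 0) (hB₁ : deriv B p.2 = 0)
    (hdet_A : det3 (iteratedDeriv 2 A p.1) (iteratedDeriv 2 B p.2) (iteratedDeriv 3 A p.1) ≠ 0)
    (hdet_B : det3 (iteratedDeriv 2 A p.1) (iteratedDeriv 2 B p.2) (iteratedDeriv 3 B p.2) ≠ 0) :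
    AEquiv (fun q => A q.1 + B q.2) p sumOfCusps 0 := by
  obtain ⟨a, ha, hA₂, hA₃, hAa⟩ := exists_eventually_eq_add_sq_smul (g := fun t => A (p.1 + t))
    (by fun_prop) (by simpa [deriv_comp_const_add] using hA₁)
  obtain ⟨b, hb, hB₂, hB₃, hBb⟩ := exists_eventually_eq_add_sq_smul (g := fun t => B (p.2 + t))
    (by fun_prop) (by simpa [deriv_comp_const_add] using hB₁)
  simp only [iteratedDeriv_comp_const_add, add_zero] at hA₂ hA₃ hB₂ hB₃
  rw [hA₂, hB₂, hA₃, det3_smul_smul_smul] at hdet_A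
  rw [hA₂, hB₂, hB₃, det3_smul_smul_smul] at hdet_B
  refine .trans (.of_translate ?_) (aEquiv_sumOfCusps_of_det3_ne_zero ha hb
    (right_ne_zero_of_mul hdet_A) (right_ne_zero_of_mul hdet_B))
  filter_upwards [(continuousAt_fst (p := (0 : R2))).eventually hAa,
    (continuousAt_snd (p := (0 : R2))).eventually hBb] with q h₁ h₂
  simp only [add_zero] at h₁ h₂
  simp only [Prod.fst_add, Prod.snd_add, h₁, h₂]
  abel

theorem aEquiv_add_sumOfCusps_iff {A B : ℝ → R3} (hA : ContDiff ℝ ∞ A) (hB : ContDiff ℝ ∞ B)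
    (p : R2) : AEquiv (fun q => A q.1 + B q.2) p sumOfCusps 0 ↔
      deriv A p.1 = 0 ∧ deriv B p.2 = 0 ∧
        det3 (iteratedDeriv 2 A p.1) (iteratedDeriv 2 B p.2) (iteratedDeriv 3 A p.1) ≠ 0 ∧
        det3 (iteratedDeriv 2 A p.1) (iteratedDeriv 2 B p.2) (iteratedDeriv 3 B p.2) ≠ 0 :=
  ⟨fun h => h.det3_iteratedDeriv_ne_zero hA hB, fun ⟨hA₁, hB₁, hdet_A, hdet_B⟩ =>
    aEquiv_sumOfCusps_of_iteratedDeriv hA hB hA₁ hB₁ hdet_A hdet_B⟩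

/-! ### Weierstrass data -/

/-- The null direction `φ₁(g)` of the `u`-curves: `f_u = ω₁ φ₁(g₁)` for a generalized timelike
minimal surface, the factor `1 / 2` of the Weierstrass data being absorbed here. -/
def nullVectorFst (g : ℝ) : R3 := ((-1 - g ^ 2) / 2, (1 - g ^ 2) / 2, g)

/-- The null direction `φ₂(g)` of the `v`-curves: `f_v = ω₂ φ₂(g₂)` for a generalized timelike
minimal surface, the factor `1 / 2` of the Weierstrass data being absorbed here. -/
def nullVectorSnd (g : ℝ) : R3 := ((1 + g ^ 2) / 2, (1 - g ^ 2) / 2, -g)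

theorem contDiff_nullVectorFst : ContDiff ℝ ∞ nullVectorFst := by
  unfold nullVectorFst
  fun_prop

theorem contDiff_nullVectorSnd : ContDiff ℝ ∞ nullVectorSnd := by
  unfold nullVectorSnd
  fun_prop

theorem nullVectorFst_ne_zero (g : ℝ) : nullVectorFst g ≠ 0 := fun h => by
  simp only [nullVectorFst, Prod.mk_eq_zero] at h
  linarith [h.1, h.2.1]

theorem nullVectorSnd_ne_zero (g : ℝ) : nullVectorSnd g ≠ 0 := fun h => by
  simp only [nullVectorSnd, Prod.mk_eq_zero] at h
  linarith [h.1, h.2.1]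

theorem hasDerivAt_nullVectorFst (g : ℝ) : HasDerivAt nullVectorFst (-g, -g, 1) g := by
  have hsq := hasDerivAt_pow 2 g
  refine HasDerivAt.congr_deriv (((hsq.const_sub (-1)).div_const 2).prodMk
    (((hsq.const_sub 1).div_const 2).prodMk (hasDerivAt_id g))) ?_
  simp only [Nat.cast_ofNat, Nat.add_one_sub_one, pow_one, Prod.mk.injEq, and_true]
  exact ⟨by ring, by ring⟩

theorem hasDerivAt_nullVectorSnd (g : ℝ) : HasDerivAt nullVectorSnd (g, -g, -1) g := by
  have hsq := hasDerivAt_pow 2 g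
  refine HasDerivAt.congr_deriv (((hsq.const_add 1).div_const 2).prodMk
    (((hsq.const_sub 1).div_const 2).prodMk (hasDerivAt_id g).neg)) ?_
  simp only [Nat.cast_ofNat, Nat.add_one_sub_one, pow_one, Prod.mk.injEq, and_true]
  exact ⟨by ring, by ring⟩

theorem det3_smul_nullVector_fst (g h r s c d : ℝ) :
    det3 (r • nullVectorFst g) (s • nullVectorSnd h) (c • nullVectorFst g + d • (-g, -g, 1)) =
      -(r * s * d * (1 - g * h) ^ 2 / 2) := by
  simp only [det3, nullVectorFst, nullVectorSnd, Prod.smul_mk, Prod.mk_add_mk, smul_eq_mul]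
  ring

theorem det3_smul_nullVector_snd (g h r s c d : ℝ) :
    det3 (r • nullVectorFst g) (s • nullVectorSnd h) (c • nullVectorSnd h + d • (h, -h, -1)) =
      r * s * d * (1 - g * h) ^ 2 / 2 := by
  simp only [det3, nullVectorFst, nullVectorSnd, Prod.smul_mk, Prod.mk_add_mk, smul_eq_mul]
  ring

theorem iteratedDeriv_of_deriv_eq_smul {F : Type*} [NormedAddCommGroup F] [NormedSpace ℝ F]
    {A α : ℝ → F} {w : ℝ → ℝ} (hA : ∀ t, HasDerivAt A (w t • α t) t) (hw : ContDiff ℝ ∞ w)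
    (hα : ContDiff ℝ ∞ α) {t : ℝ} (ht : w t = 0) :
    iteratedDeriv 2 A t = deriv w t • α t ∧
      iteratedDeriv 3 A t = iteratedDeriv 2 w t • α t + (2 * deriv w t) • deriv α t := by
  have hw' (s : ℝ) : HasDerivAt w (deriv w s) s := (hw.differentiable (by simp) s).hasDerivAt
  have hα' (s : ℝ) : HasDerivAt α (deriv α s) s := (hα.differentiable (by simp) s).hasDerivAt
  have hw'' : HasDerivAt (deriv w) (deriv (deriv w) t) t :=
    ((ContDiff.deriv' (n := ∞) hw).differentiable (by simp) t).hasDerivAt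
  have hα'' : HasDerivAt (deriv α) (deriv (deriv α) t) t :=
    ((ContDiff.deriv' (n := ∞) hα).differentiable (by simp) t).hasDerivAt
  have hA₁ : deriv A = fun s => w s • α s := funext fun s => (hA s).deriv
  have hA₂ : deriv (deriv A) = fun s => w s • deriv α s + deriv w s • α s := by
    rw [hA₁]
    exact funext fun s => ((hw' s).fun_smul (hα' s)).deriv
  simp only [iteratedDeriv_succ, iteratedDeriv_zero, hA₂,
    (((hw' t).fun_smul hα'').fun_add (hw''.fun_smul (hα' t))).deriv]
  simp only [ht]
  exact ⟨by module, by module⟩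

theorem IsGTMS.exists_eq_add {f : R2 → R3} {g1 g2 w1 w2 : ℝ → ℝ}
    (hf : IsGTMS f g1 g2 w1 w2) : ∃ A B : ℝ → R3, ContDiff ℝ ∞ A ∧ ContDiff ℝ ∞ B ∧
      (∀ u, HasDerivAt A (w1 u • nullVectorFst (g1 u)) u) ∧
      (∀ v, HasDerivAt B (w2 v • nullVectorSnd (g2 v)) v) ∧ f = fun q => A q.1 + B q.2 := by
  have hs := hf.smooth_f
  have hu (v u : ℝ) : HasDerivAt (fun u => f (u, v)) (w1 u • nullVectorFst (g1 u)) u := by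
    refine ((hs.differentiable (by simp) (u, v)).hasFDerivAt.comp_hasDerivAt u
      ((hasDerivAt_id u).prodMk (hasDerivAt_const u v))).congr_deriv ?_
    change pu f _ = _
    simp only [hf.deriv_u, nullVectorFst, Prod.smul_mk, smul_eq_mul, Prod.mk.injEq]
    exact ⟨by ring, by ring, by ring⟩
  have hv (v : ℝ) : HasDerivAt (fun v => f (0, v)) (w2 v • nullVectorSnd (g2 v)) v := by
    refine ((hs.differentiable (by simp) (0, v)).hasFDerivAt.comp_hasDerivAt v
      ((hasDerivAt_const v (0 : ℝ)).prodMk (hasDerivAt_id v))).congr_deriv ?_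
    change pv f _ = _
    simp only [hf.deriv_v, nullVectorSnd, Prod.smul_mk, smul_eq_mul, Prod.mk.injEq]
    exact ⟨by ring, by ring, by ring⟩
  refine ⟨fun u => f (u, 0), fun v => f (0, v) - f 0, by fun_prop, by fun_prop, hu 0,
    fun v => (hv v).sub_const _, funext fun ⟨u, v⟩ => ?_⟩
  have hdiff (u : ℝ) : HasDerivAt (fun u => f (u, v) - f (u, 0)) 0 u := by
    simpa using (hu v u).fun_sub (hu 0 u)
  have hconst := is_const_of_deriv_eq_zero (fun u => (hdiff u).differentiableAt)
    (fun u => (hdiff u).deriv) u 0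
  exact sub_eq_iff_eq_add'.1 hconst

theorem iteratedDeriv_of_deriv_eq_smul_comp {F : Type*} [NormedAddCommGroup F] [NormedSpace ℝ F]
    {A φ : ℝ → F} {φ' : F} {g w : ℝ → ℝ} (hA : ∀ t, HasDerivAt A (w t • φ (g t)) t)
    (hφ : ContDiff ℝ ∞ φ) (hg : ContDiff ℝ ∞ g) (hw : ContDiff ℝ ∞ w) {t : ℝ} (ht : w t = 0)
    (hφ' : HasDerivAt φ φ' (g t)) :
    iteratedDeriv 2 A t = deriv w t • φ (g t) ∧
      iteratedDeriv 3 A t =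
        iteratedDeriv 2 w t • φ (g t) + (2 * deriv w t * deriv g t) • φ' := by
  have hφg : deriv (fun t => φ (g t)) t = deriv g t • φ' :=
    (hφ'.scomp t (hg.differentiable (by simp) t).hasDerivAt).deriv
  simpa only [hφg, smul_smul] using iteratedDeriv_of_deriv_eq_smul hA hw (hφ.comp hg) ht

theorem det3_iteratedDeriv_ne_zero_iff {A B : ℝ → R3} {g1 g2 w1 w2 : ℝ → ℝ} {u v : ℝ}
    (hA : ∀ u, HasDerivAt A (w1 u • nullVectorFst (g1 u)) u)
    (hB : ∀ v, HasDerivAt B (w2 v • nullVectorSnd (g2 v)) v)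
    (hg1 : ContDiff ℝ ∞ g1) (hg2 : ContDiff ℝ ∞ g2)
    (hw1 : ContDiff ℝ ∞ w1) (hw2 : ContDiff ℝ ∞ w2) (hu : w1 u = 0) (hv : w2 v = 0) :
    det3 (iteratedDeriv 2 A u) (iteratedDeriv 2 B v) (iteratedDeriv 3 A u) ≠ 0 ∧
        det3 (iteratedDeriv 2 A u) (iteratedDeriv 2 B v) (iteratedDeriv 3 B v) ≠ 0 ↔
      g1 u * g2 v ≠ 1 ∧ deriv g1 u * deriv g2 v ≠ 0 ∧ deriv w1 u * deriv w2 v ≠ 0 := by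
  obtain ⟨hA₂, hA₃⟩ := iteratedDeriv_of_deriv_eq_smul_comp hA contDiff_nullVectorFst hg1 hw1 hu
    (hasDerivAt_nullVectorFst _)
  obtain ⟨hB₂, hB₃⟩ := iteratedDeriv_of_deriv_eq_smul_comp hB contDiff_nullVectorSnd hg2 hw2 hv
    (hasDerivAt_nullVectorSnd _)
  have hsub : 1 - g1 u * g2 v = 0 ↔ g1 u * g2 v = 1 := by rw [sub_eq_zero, eq_comm]
  simp only [hA₂, hA₃, hB₂, hB₃, det3_smul_nullVector_fst, det3_smul_nullVector_snd]
  simp only [ne_eq, neg_eq_zero, div_eq_zero_iff, mul_eq_zero, OfNat.ofNat_ne_zero, or_false,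
    false_or, not_false_eq_true, pow_eq_zero_iff, hsub]
  tauto

theorem IsGTMS.aEquiv_sumOfCusps_iff {f : R2 → R3} {g1 g2 w1 w2 : ℝ → ℝ}
    (hf : IsGTMS f g1 g2 w1 w2) (p : R2) :
    AEquiv f p sumOfCusps 0 ↔
      w1 p.1 = 0 ∧ w2 p.2 = 0 ∧ g1 p.1 * g2 p.2 ≠ 1 ∧
        deriv g1 p.1 * deriv g2 p.2 ≠ 0 ∧ deriv w1 p.1 * deriv w2 p.2 ≠ 0 := by
  obtain ⟨A, B, hA, hB, hA', hB', rfl⟩ := hf.exists_eq_add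
  rw [aEquiv_add_sumOfCusps_iff hA hB, (hA' _).deriv, (hB' _).deriv,
    smul_eq_zero_iff_left (nullVectorFst_ne_zero _),
    smul_eq_zero_iff_left (nullVectorSnd_ne_zero _)]
  exact and_congr_right fun hu => and_congr_right fun hv => det3_iteratedDeriv_ne_zero_iff hA' hB'
    hf.smooth_g1 hf.smooth_g2 hf.smooth_w1 hf.smooth_w2 hu hv

theorem aEquiv_fD4p_iff_aEquiv_sumOfCusps {f : R2 → R3} {p : R2} :
    AEquiv f p fD4p (0, 0) ↔ AEquiv f p sumOfCusps 0 := by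
  have hcont : Continuous sumOfCusps := by
    unfold sumOfCusps
    fun_prop
  exact ⟨fun h => h.trans (aEquiv_sumOfCusps_fD4p.symm hcont.continuousAt),
    fun h => h.trans aEquiv_sumOfCusps_fD4p⟩

/-- criterion for the D₄⁺ singularity. -/
theorem criterion_D4_plus
    (f : R2 → R3) (g1 g2 w1 w2 : ℝ → ℝ) (hf : IsGTMS f g1 g2 w1 w2)
    (p : R2) :
    AEquiv f p fD4p (0, 0) ↔
      (w1 p.1 = 0 ∧ w2 p.2 = 0 ∧ g1 p.1 * g2 p.2 ≠ 1 ∧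
        deriv g1 p.1 * deriv g2 p.2 ≠ 0 ∧ deriv w1 p.1 * deriv w2 p.2 ≠ 0) :=
  aEquiv_fD4p_iff_aEquiv_sumOfCusps.trans (hf.aEquiv_sumOfCusps_iff p)
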